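/- For every λ > 0 there exists a unique C³ function l : T → ℝ satisfying the kernel equation l_{xxx} + l_{yyy} + l_x + l_y = λl on T together with the boundary conditions l(x,1) = 0, l(x,x) = 0 and l_x(x,x) = (λ/3)(1−x) for all x ∈ [0,1]. -/

import Mathlib

open MeasureTheory

noncomputable section

/-- The closed triangle `T = {(x, y) : 0 ≤ x ≤ y ≤ 1}`. -/
def T : Set (ℝ × ℝ) := {q : ℝ × ℝ | 0 ≤ q.1 ∧ q.1 ≤ q.2 ∧ q.2 ≤ 1}

/-- Partial derivative in the first variable. -/
def pdx (f : ℝ → ℝ → ℝ) (x y : ℝ) : ℝ := deriv (fun x' => f x' y) x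

/-- Partial derivative in the second variable. -/
def pdy (f : ℝ → ℝ → ℝ) (x y : ℝ) : ℝ := deriv (fun y' => f x y') y

/-- The inverse controller kernel for `lam`: a C³ function with
`l_xxx + l_yyy + l_x + l_y = lam l` on `T`, `l(x,1)=0`, `l(x,x)=0`,
`l_x(x,x) = (lam/3)(1-x)`. -/
def IsInverseControllerKernel (lam : ℝ) (l : ℝ → ℝ → ℝ) : Prop :=
  ContDiff ℝ 3 (Function.uncurry l) ∧
  (∀ x y : ℝ, (x, y) ∈ T →
    pdx (pdx (pdx l)) x y + pdy (pdy (pdy l)) x y + pdx l x y + pdy l x y = lam * l x y) ∧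
  (∀ x ∈ Set.Icc (0:ℝ) 1, l x 1 = 0) ∧
  (∀ x ∈ Set.Icc (0:ℝ) 1, l x x = 0) ∧
  (∀ x ∈ Set.Icc (0:ℝ) 1, pdx l x x = lam / 3 * (1 - x))

/-!
The operator `∂ₓ³ + ∂ᵧ³ + ∂ₓ + ∂ᵧ` is `∂ₓ + ∂ᵧ` composed with an elliptic second order operator.
Along the lines `t = y - x = const` let `a` be a coordinate vanishing on a given transversal line.
For functions with bounded Taylor coefficients in `a`, the kernel equation is a linear second order
differential equation in `t` for the coefficients of the `a`-derivative, in the Banach space of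
bounded sequences. Solving it with `a = 0` on the edge `y = 1` gives existence.

For uniqueness, let `D` be the difference of two kernels. The same construction along the line
`x + y = s₀` yields a solution with the values of `D` on this line and the Cauchy data of `D` on the
diagonal. It agrees with `D` near the line, by unique continuation for the elliptic factor, which
follows from a Carleman estimate for `∂̄`. Hence `D` is analytic in `s = x + y` for fixed `t`, and
its expansion about `s = 1` is valid up to `y = 1`. There `D = 0`, which expresses the values of `D`
on `s = 1` by the coefficients of its `s`-derivative; these then solve a homogeneous linear equation
in `t` with zero initial data.
-/

section

open Set Filter Topology

/-! ### Directional derivatives -/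

section DirDeriv

variable {E E' F : Type*} [NormedAddCommGroup E] [NormedSpace ℝ E] [NormedAddCommGroup E']
  [NormedSpace ℝ E'] [NormedAddCommGroup F] [NormedSpace ℝ F]

/-- The derivative of `f` in the direction `v`, as a function of the point: `fderiv` with its
arguments in the order in which such derivatives are iterated. -/
def dirDeriv (v : E) (f : E → F) (x : E) : F := fderiv ℝ f x v

theorem dirDeriv_smul_dir (c : ℝ) (v : E) (f : E → F) : dirDeriv (c • v) f = c • dirDeriv v f :=
  funext fun x => map_smul (fderiv ℝ f x) c v

theorem dirDeriv_add_dir (v w : E) (f : E → F) :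
    dirDeriv (v + w) f = dirDeriv v f + dirDeriv w f :=
  funext fun x => map_add (fderiv ℝ f x) v w

theorem dirDeriv_eq_add (v : ℝ × ℝ) (f : ℝ × ℝ → F) :
    dirDeriv v f = v.1 • dirDeriv (1, 0) f + v.2 • dirDeriv (0, 1) f := by
  rw [← dirDeriv_smul_dir, ← dirDeriv_smul_dir, ← dirDeriv_add_dir]
  simp

theorem dirDeriv_add (v : E) {f g : E → F} (hf : Differentiable ℝ f) (hg : Differentiable ℝ g) :
    dirDeriv v (f + g) = dirDeriv v f + dirDeriv v g := by
  ext x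
  simp [dirDeriv, fderiv_add (hf x) (hg x)]

theorem dirDeriv_sub (v : E) {f g : E → F} (hf : Differentiable ℝ f) (hg : Differentiable ℝ g) :
    dirDeriv v (f - g) = dirDeriv v f - dirDeriv v g := by
  ext x
  simp [dirDeriv, fderiv_sub (hf x) (hg x)]

theorem dirDeriv_const_smul (v : E) (c : ℝ) (f : E → F) :
    dirDeriv v (c • f) = c • dirDeriv v f := by
  ext x
  simp [dirDeriv, fderiv_const_smul_field]

theorem contDiff_dirDeriv (v : E) {f : E → F} {m n : WithTop ℕ∞} (hf : ContDiff ℝ n f)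
    (hmn : m + 1 ≤ n) : ContDiff ℝ m (dirDeriv v f) :=
  (hf.fderiv_right hmn).clm_apply contDiff_const

theorem differentiable_dirDeriv (v : E) {f : E → F} (hf : ContDiff ℝ 2 f) :
    Differentiable ℝ (dirDeriv v f) :=
  (contDiff_dirDeriv (m := 1) v hf (by norm_num)).differentiable one_ne_zero

theorem differentiable_dirDeriv_dirDeriv (v w : E) {f : E → F} (hf : ContDiff ℝ 3 f) :
    Differentiable ℝ (dirDeriv v (dirDeriv w f)) :=
  differentiable_dirDeriv v (contDiff_dirDeriv w hf (by norm_num))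

theorem dirDeriv_comm (v w : E) {f : E → F} (hf : ContDiff ℝ 2 f) :
    dirDeriv v (dirDeriv w f) = dirDeriv w (dirDeriv v f) := by
  ext x
  have hfx : DifferentiableAt ℝ (fderiv ℝ f) x :=
    (hf.fderiv_right (m := 1) le_rfl).differentiable one_ne_zero x
  have hsnd (a b : E) : dirDeriv a (dirDeriv b f) x = fderiv ℝ (fderiv ℝ f) x a b := by
    change fderiv ℝ (fun y => fderiv ℝ f y b) x a = _
    rw [fderiv_clm_apply hfx (differentiableAt_const b)]
    simp
  rw [hsnd, hsnd]
  exact (hf.contDiffAt.isSymmSndFDerivAt (by simp)) v w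

theorem dirDeriv_dirDeriv_eq (v : ℝ × ℝ) {f : ℝ × ℝ → F} (hf : ContDiff ℝ 2 f) :
    dirDeriv v (dirDeriv v f) = v.1 ^ 2 • dirDeriv (1, 0) (dirDeriv (1, 0) f) +
      (2 * (v.1 * v.2)) • dirDeriv (1, 0) (dirDeriv (0, 1) f) +
        v.2 ^ 2 • dirDeriv (0, 1) (dirDeriv (0, 1) f) := by
  have hdiff (e : ℝ × ℝ) (c : ℝ) : Differentiable ℝ (c • dirDeriv e f) :=
    (differentiable_dirDeriv e hf).const_smul c
  rw [dirDeriv_eq_add v, dirDeriv_eq_add v f]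
  simp only [dirDeriv_add _ (hdiff _ _) (hdiff _ _), dirDeriv_const_smul,
    dirDeriv_comm (0, 1) (1, 0) hf]
  module

theorem dirDeriv_comp (v : E) {G : E' → F} (hG : Differentiable ℝ G) {A : E → E'}
    {L : E →L[ℝ] E'} (hA : ∀ x, HasFDerivAt A L x) :
    dirDeriv v (G ∘ A) = dirDeriv (L v) G ∘ A := by
  ext x
  simp [dirDeriv, ((hG (A x)).hasFDerivAt.comp x (hA x)).fderiv]

theorem hasDerivAt_comp_dirDeriv {f : E → F} (hf : Differentiable ℝ f) {c : ℝ → E} {v : E} {t : ℝ}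
    (hc : HasDerivAt c v t) : HasDerivAt (fun τ => f (c τ)) (dirDeriv v f (c t)) t :=
  (hf (c t)).hasFDerivAt.comp_hasDerivAt t hc

end DirDeriv

section KernelOp

/-- The differential operator `∂ₓ³ + ∂ᵧ³ + ∂ₓ + ∂ᵧ` of the kernel equation. -/
def kernelOp (F : ℝ × ℝ → ℝ) : ℝ × ℝ → ℝ :=
  dirDeriv (1, 0) (dirDeriv (1, 0) (dirDeriv (1, 0) F)) +
    dirDeriv (0, 1) (dirDeriv (0, 1) (dirDeriv (0, 1) F)) + dirDeriv (1, 0) F + dirDeriv (0, 1) F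

/-- The elliptic operator `∂ₓ² - ∂ₓ∂ᵧ + ∂ᵧ² + 1`, which is `kernelOp` divided by `∂ₓ + ∂ᵧ`. -/
def ellipticOp (F : ℝ × ℝ → ℝ) : ℝ × ℝ → ℝ :=
  dirDeriv (1, 0) (dirDeriv (1, 0) F) - dirDeriv (1, 0) (dirDeriv (0, 1) F) +
    dirDeriv (0, 1) (dirDeriv (0, 1) F) + F

variable {F G : ℝ × ℝ → ℝ}

theorem kernelOp_eq_ellipticOp (hF : ContDiff ℝ 3 F) :
    kernelOp F = ellipticOp (dirDeriv (1, 1) F) := by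
  have hF2 : ContDiff ℝ 2 F := hF.of_le (by norm_num)
  have hsum : dirDeriv (1, 1) F = dirDeriv (1, 0) F + dirDeriv (0, 1) F := by
    rw [dirDeriv_eq_add]
    simp
  have hcomm₁ := dirDeriv_comm (0, 1) (1, 0) hF2
  have hcomm₂ := dirDeriv_comm (0, 1) (1, 0) (contDiff_dirDeriv (0, 1) hF (by norm_num))
  have hadd₂ (v w : ℝ × ℝ) : dirDeriv v (dirDeriv w (dirDeriv (1, 0) F + dirDeriv (0, 1) F)) =
      dirDeriv v (dirDeriv w (dirDeriv (1, 0) F)) +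
        dirDeriv v (dirDeriv w (dirDeriv (0, 1) F)) := by
    rw [dirDeriv_add w (differentiable_dirDeriv _ hF2) (differentiable_dirDeriv _ hF2),
      dirDeriv_add v (differentiable_dirDeriv_dirDeriv _ _ hF)
        (differentiable_dirDeriv_dirDeriv _ _ hF)]
  simp only [kernelOp, ellipticOp, hsum, hadd₂, hcomm₁, hcomm₂]
  ring

theorem ellipticOp_const_smul (c : ℝ) (F : ℝ × ℝ → ℝ) :
    ellipticOp (c • F) = c • ellipticOp F := by
  simp only [ellipticOp, dirDeriv_const_smul, smul_add, smul_sub]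

theorem kernelOp_sub (hF : ContDiff ℝ 3 F) (hG : ContDiff ℝ 3 G) :
    kernelOp (F - G) = kernelOp F - kernelOp G := by
  have hF2 : ContDiff ℝ 2 F := hF.of_le (by norm_num)
  have hG2 : ContDiff ℝ 2 G := hG.of_le (by norm_num)
  have hsub (v : ℝ × ℝ) : dirDeriv v (F - G) = dirDeriv v F - dirDeriv v G :=
    dirDeriv_sub v (hF.differentiable (by norm_num)) (hG.differentiable (by norm_num))
  have hsub₃ (v : ℝ × ℝ) : dirDeriv v (dirDeriv v (dirDeriv v F - dirDeriv v G)) =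
      dirDeriv v (dirDeriv v (dirDeriv v F)) - dirDeriv v (dirDeriv v (dirDeriv v G)) := by
    rw [dirDeriv_sub v (differentiable_dirDeriv v hF2) (differentiable_dirDeriv v hG2),
      dirDeriv_sub v (differentiable_dirDeriv_dirDeriv v v hF)
        (differentiable_dirDeriv_dirDeriv v v hG)]
  simp only [kernelOp, hsub, hsub₃]
  ring

theorem uncurry_pdx {f : ℝ → ℝ → ℝ} (hf : Differentiable ℝ (Function.uncurry f)) :
    Function.uncurry (pdx f) = dirDeriv (1, 0) (Function.uncurry f) :=
  funext fun p => (hasDerivAt_comp_dirDeriv hf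
    ((hasDerivAt_id p.1).prodMk (hasDerivAt_const p.1 p.2))).deriv

theorem uncurry_pdy {f : ℝ → ℝ → ℝ} (hf : Differentiable ℝ (Function.uncurry f)) :
    Function.uncurry (pdy f) = dirDeriv (0, 1) (Function.uncurry f) :=
  funext fun p => (hasDerivAt_comp_dirDeriv hf
    ((hasDerivAt_const p.2 p.1).prodMk (hasDerivAt_id p.2))).deriv

theorem kernelOp_uncurry {f : ℝ → ℝ → ℝ} (hf : ContDiff ℝ 3 (Function.uncurry f)) (x y : ℝ) :
    pdx (pdx (pdx f)) x y + pdy (pdy (pdy f)) x y + pdx f x y + pdy f x y =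
      kernelOp (Function.uncurry f) (x, y) := by
  have hf2 : ContDiff ℝ 2 (Function.uncurry f) := hf.of_le (by norm_num)
  have hx := uncurry_pdx (hf.differentiable (by norm_num))
  have hxx := uncurry_pdx (hx ▸ differentiable_dirDeriv _ hf2)
  have hxxx := uncurry_pdx (hxx ▸ hx ▸ differentiable_dirDeriv_dirDeriv _ _ hf)
  have hy := uncurry_pdy (hf.differentiable (by norm_num))
  have hyy := uncurry_pdy (hy ▸ differentiable_dirDeriv _ hf2)
  have hyyy := uncurry_pdy (hyy ▸ hy ▸ differentiable_dirDeriv_dirDeriv _ _ hf)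
  simp only [kernelOp, Pi.add_apply, ← hx, ← hxx, ← hxxx, ← hy, ← hyy, ← hyyy,
    Function.uncurry_apply_pair]

end KernelOp

/-! ### Linear differential equations in Banach spaces -/

section LinearODE

variable {X : Type*} [NormedAddCommGroup X] [NormedSpace ℝ X]

theorem contDiff_of_hasDerivAt_linear {A : X →L[ℝ] X} {Z F : ℝ → X} {n : ℕ}
    (hF : ContDiff ℝ n F) (hZ : ∀ t, HasDerivAt Z (A (Z t) + F t) t) :
    ContDiff ℝ (n + 1) Z := by
  have hdiff : Differentiable ℝ Z := fun t => (hZ t).differentiableAt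
  have hderiv : deriv Z = fun t => A (Z t) + F t := funext fun t => (hZ t).deriv
  suffices h : ContDiff ℝ n Z from
    contDiff_succ_iff_deriv.2 ⟨hdiff, by simp, hderiv ▸ (A.contDiff.comp h).add hF⟩
  induction n with
  | zero => exact contDiff_zero.2 hdiff.continuous
  | succ n ih =>
    have hFn : ContDiff ℝ n F := hF.of_le (by exact_mod_cast n.le_succ)
    push_cast
    exact contDiff_succ_iff_deriv.2 ⟨hdiff, by simp, hderiv ▸ (A.contDiff.comp (ih hFn)).add hFn⟩

theorem exp_zero_smul_apply (A : X →L[ℝ] X) (x : X) : NormedSpace.exp ((0 : ℝ) • A) x = x := by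
  simp

theorem apply_exp_smul_apply (A : X →L[ℝ] X) (t : ℝ) (x : X) :
    NormedSpace.exp (t • A) (A x) = A (NormedSpace.exp (t • A) x) :=
  DFunLike.congr_fun ((Commute.refl A).smul_left t).exp_left x

variable [CompleteSpace X]

theorem analyticOnNhd_exp_smul (A : X →L[ℝ] X) :
    AnalyticOnNhd ℝ (fun t : ℝ => NormedSpace.exp (t • A)) univ := fun t _ =>
  (NormedSpace.exp_analytic (𝕂 := ℝ) (t • A)).fun_comp (f := fun t : ℝ => t • A)
    (analyticAt_id.smul analyticAt_const)

theorem contDiff_exp_smul (A : X →L[ℝ] X) {n : WithTop ℕ∞} :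
    ContDiff ℝ n (fun t : ℝ => NormedSpace.exp (t • A)) :=
  (analyticOnNhd_exp_smul A).contDiff

theorem exp_smul_apply_exp_neg_smul (A : X →L[ℝ] X) (t : ℝ) (x : X) :
    NormedSpace.exp (t • A) (NormedSpace.exp ((-t) • A) x) = x := by
  let +nondep : NormedAlgebra ℚ (X →L[ℝ] X) := .restrictScalars ℚ ℝ _
  have h := NormedSpace.exp_add_of_commute (((Commute.refl A).smul_left t).smul_right (-t))
  rw [← add_smul, add_neg_cancel, zero_smul, NormedSpace.exp_zero] at h
  exact (DFunLike.congr_fun h x).symm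

theorem hasDerivAt_exp_smul_apply (A : X →L[ℝ] X) {u : ℝ → X} {u' : X} {t : ℝ}
    (hu : HasDerivAt u u' t) :
    HasDerivAt (fun s => NormedSpace.exp (s • A) (u s))
      (NormedSpace.exp (t • A) (A (u t) + u')) t := by
  simpa using (hasDerivAt_exp_smul_const A t).clm_apply hu

theorem hasFDerivAt_exp_smul_apply (A : X →L[ℝ] X) {w : ℝ → X} {w' : X} {p : ℝ × ℝ}
    (hw : HasDerivAt w w' p.2) :
    HasFDerivAt (fun q : ℝ × ℝ => NormedSpace.exp (q.1 • A) (w q.2))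
      ((ContinuousLinearMap.fst ℝ ℝ ℝ).smulRight (NormedSpace.exp (p.1 • A) (A (w p.2))) +
        (ContinuousLinearMap.snd ℝ ℝ ℝ).smulRight (NormedSpace.exp (p.1 • A) w')) p := by
  have hexp := (hasDerivAt_exp_smul_const A p.1).hasFDerivAt.comp p (hasFDerivAt_fst (𝕜 := ℝ))
  have hwsnd := hw.hasFDerivAt.comp p (hasFDerivAt_snd (𝕜 := ℝ))
  exact (hexp.clm_apply hwsnd).congr_fderiv (by ext <;> simp)

theorem exp_smul_apply_of_apply_eq_zero {A : X →L[ℝ] X} {x : X} (hx : A x = 0) (t : ℝ) :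
    NormedSpace.exp (t • A) x = x := by
  have hderiv (s : ℝ) : HasDerivAt (fun s => NormedSpace.exp (s • A) x) 0 s := by
    simpa [hx] using hasDerivAt_exp_smul_apply A (hasDerivAt_const s x)
  simpa using is_const_of_deriv_eq_zero (fun s => (hderiv s).differentiableAt)
    (fun s => (hderiv s).deriv) t 0

theorem exp_smul_apply_of_apply_apply_eq_zero {A : X →L[ℝ] X} {x : X} (hx : A (A x) = 0) (t : ℝ) :
    NormedSpace.exp (t • A) x = x + t • A x := by
  have hderiv (s : ℝ) : HasDerivAt (fun s => NormedSpace.exp (s • A) x - s • A x) 0 s := by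
    simpa [exp_smul_apply_of_apply_eq_zero hx] using
      (hasDerivAt_exp_smul_apply A (hasDerivAt_const s x)).fun_sub
        ((hasDerivAt_id s).smul_const (A x))
  have h := is_const_of_deriv_eq_zero (fun s => (hderiv s).differentiableAt)
    (fun s => (hderiv s).deriv) t 0
  simp only [zero_smul, NormedSpace.exp_zero, one_apply_eq_self, sub_zero] at h
  exact sub_eq_iff_eq_add.1 h

/-- Duhamel's formula. -/
theorem exists_hasDerivAt_linear (A : X →L[ℝ] X) (z₀ : X) {F : ℝ → X} (hF : Continuous F) :
    ∃ Z : ℝ → X, Z 0 = z₀ ∧ ∀ t, HasDerivAt Z (A (Z t) + F t) t := by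
  have hexp : Continuous fun τ : ℝ => NormedSpace.exp ((-τ) • A) (F τ) :=
    ((contDiff_exp_smul A (n := 0)).continuous.comp continuous_neg).clm_apply hF
  refine ⟨fun t => NormedSpace.exp (t • A)
    (z₀ + ∫ τ in (0 : ℝ)..t, NormedSpace.exp ((-τ) • A) (F τ)), by simp, fun t => ?_⟩
  have hint := (hexp.integral_hasStrictDerivAt 0 t).hasDerivAt.const_add z₀
  refine (hasDerivAt_exp_smul_apply A hint).congr_deriv ?_
  rw [map_add, exp_smul_apply_exp_neg_smul, apply_exp_smul_apply]

theorem exists_hasDerivAt_linear_second_order (B C : X →L[ℝ] X) (z₀ z₁ : X) {f : ℝ → X} {n : ℕ}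
    (hf : ContDiff ℝ n f) :
    ∃ w : ℝ → X, ContDiff ℝ (n + 1) w ∧ w 0 = z₀ ∧ deriv w 0 = z₁ ∧
      ∀ t, HasDerivAt (deriv w) (B (w t) + C (deriv w t) + f t) t := by
  let A : X × X →L[ℝ] X × X :=
    (ContinuousLinearMap.snd ℝ X X).prod (B.coprod C)
  have hF : ContDiff ℝ n fun t => ((0 : X), f t) := contDiff_const.prodMk hf
  obtain ⟨Z, hZ0, hZ⟩ := exists_hasDerivAt_linear A (z₀, z₁) hF.continuous
  have hw (t : ℝ) : HasDerivAt (fun t => (Z t).1) (Z t).2 t :=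
    (hZ t).hasFDerivAt.fst.hasDerivAt.congr_deriv (by simp [A])
  have hderiv : deriv (fun t => (Z t).1) = fun t => (Z t).2 := funext fun t => (hw t).deriv
  refine ⟨fun t => (Z t).1, (contDiff_of_hasDerivAt_linear hF hZ).fst, by simp [hZ0],
    by simp [hderiv, hZ0], fun t => ?_⟩
  rw [hderiv]
  exact (hZ t).hasFDerivAt.snd.hasDerivAt.congr_deriv (by simp [A])

end LinearODE

/-! ### Power series with bounded Taylor coefficients -/

section TaylorSum

open scoped ENNReal

/-- Bounded real sequences with the sup norm. The sequence `w` stands for the entire function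
`a ↦ ∑ₙ wₙ aⁿ / n!`, so that it lists the derivatives of that function at `0`. -/
abbrev TaylorCoeff := lp (fun _ : ℕ => ℝ) ∞

/-- A linear operation on sequences that does not increase the sup norm, as a continuous linear
map on Taylor coefficients. -/
def coeffMap (Φ : (ℕ → ℝ) →ₗ[ℝ] (ℕ → ℝ))
    (hΦ : ∀ (w : ℕ → ℝ) (C : ℝ), (∀ n, ‖w n‖ ≤ C) → ∀ n, ‖Φ w n‖ ≤ C) :
    TaylorCoeff →L[ℝ] TaylorCoeff :=
  LinearMap.mkContinuous
    { toFun w := ⟨Φ w, memℓp_infty ⟨‖w‖, forall_mem_range.2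
        (hΦ w ‖w‖ (lp.norm_apply_le_norm ENNReal.top_ne_zero w))⟩⟩
      map_add' v w := Subtype.ext (Φ.map_add v w)
      map_smul' c w := Subtype.ext (Φ.map_smul c w) }
    1 fun w => by
      rw [one_mul]
      exact lp.norm_le_of_forall_le (norm_nonneg w)
        (hΦ w ‖w‖ (lp.norm_apply_le_norm ENNReal.top_ne_zero w))

/-- Differentiation in terms of Taylor coefficients: the left shift. -/
def coeffDeriv : TaylorCoeff →L[ℝ] TaylorCoeff :=
  coeffMap (LinearMap.funLeft ℝ ℝ Nat.succ) fun _ _ h n => h (n + 1)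

/-- Integration from `0` in terms of Taylor coefficients: the right shift. -/
def coeffIntegral : TaylorCoeff →L[ℝ] TaylorCoeff :=
  coeffMap
    { toFun w n := n.casesOn 0 w
      map_add' v w := funext fun n => by cases n <;> simp
      map_smul' c w := funext fun n => by cases n <;> simp }
    fun w C h n => by
      cases n with
      | zero => simpa using (norm_nonneg _).trans (h 0)
      | succ n => exact h n

/-- Evaluation at `0` in terms of Taylor coefficients. -/
def coeffEval : TaylorCoeff →L[ℝ] ℝ := lp.evalCLM ℝ _ ∞ 0

/-- The Taylor coefficients of the constant function `1`. -/
def coeffOne : TaylorCoeff := lp.single ∞ 0 1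

theorem coeffDeriv_coeffOne : coeffDeriv coeffOne = 0 := by
  ext n
  change coeffOne (n + 1) = 0
  simp [coeffOne]

theorem coeffEval_coeffOne : coeffEval coeffOne = 1 := by
  change coeffOne 0 = 1
  simp [coeffOne]

theorem coeffDeriv_coeffIntegral (w : TaylorCoeff) : coeffDeriv (coeffIntegral w) = w := rfl

theorem coeffEval_coeffIntegral (w : TaylorCoeff) : coeffEval (coeffIntegral w) = 0 := rfl

/-- The Taylor coefficients of the primitive with value `c` at `0`. -/
def coeffPrimitive (c : ℝ) (w : TaylorCoeff) : TaylorCoeff := c • coeffOne + coeffIntegral w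

theorem coeffDeriv_coeffPrimitive (c : ℝ) (w : TaylorCoeff) :
    coeffDeriv (coeffPrimitive c w) = w := by
  rw [coeffPrimitive, map_add, map_smul, coeffDeriv_coeffOne, smul_zero, zero_add,
    coeffDeriv_coeffIntegral]

theorem coeffEval_coeffPrimitive (c : ℝ) (w : TaylorCoeff) :
    coeffEval (coeffPrimitive c w) = c := by
  rw [coeffPrimitive, map_add, map_smul, coeffEval_coeffOne, coeffEval_coeffIntegral, add_zero,
    smul_eq_mul, mul_one]

/-- The function `(a, b) ↦ ∑ₙ w(b)ₙ aⁿ / n!`: the sum of the series is the zeroth Taylor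
coefficient at `a`, to which `exp (a d/da)` translates. -/
def taylorSum (w : ℝ → TaylorCoeff) (p : ℝ × ℝ) : ℝ :=
  coeffEval (NormedSpace.exp (p.1 • coeffDeriv) (w p.2))

theorem contDiff_taylorSum {w : ℝ → TaylorCoeff} {n : WithTop ℕ∞} (hw : ContDiff ℝ n w) :
    ContDiff ℝ n (taylorSum w) :=
  coeffEval.contDiff.comp <|
    ((contDiff_exp_smul coeffDeriv).comp contDiff_fst).clm_apply (hw.comp contDiff_snd)

theorem analyticOnNhd_taylorSum (w : ℝ → TaylorCoeff) (b : ℝ) :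
    AnalyticOnNhd ℝ (fun a => taylorSum w (a, b)) univ :=
  (coeffEval ∘L ContinuousLinearMap.apply ℝ TaylorCoeff (w b)
    ).comp_analyticOnNhd (analyticOnNhd_exp_smul coeffDeriv)

theorem dirDeriv_taylorSum (v : ℝ × ℝ) {w : ℝ → TaylorCoeff} (hw : Differentiable ℝ w) :
    dirDeriv v (taylorSum w) = taylorSum fun b => v.1 • coeffDeriv (w b) + v.2 • deriv w b := by
  ext p
  have h : HasFDerivAt (taylorSum w) _ p := coeffEval.hasFDerivAt.comp p
    (hasFDerivAt_exp_smul_apply coeffDeriv (hw p.2).hasDerivAt)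
  simp only [dirDeriv, h.fderiv]
  simp [taylorSum]

theorem taylorSum_of_eq_zero {w : ℝ → TaylorCoeff} {b : ℝ} (hw : w b = 0) (a : ℝ) :
    taylorSum w (a, b) = 0 := by
  simp only [taylorSum, hw, map_zero]

theorem taylorSum_zero_left (w : ℝ → TaylorCoeff) (b : ℝ) :
    taylorSum w (0, b) = coeffEval (w b) :=
  congrArg coeffEval (exp_zero_smul_apply coeffDeriv (w b))

theorem taylorSum_of_eq_coeffPrimitive {w : ℝ → TaylorCoeff} {b c d : ℝ}
    (hw : w b = coeffPrimitive c (d • coeffOne)) (a : ℝ) : taylorSum w (a, b) = c + a * d := by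
  have hDw : coeffDeriv (w b) = d • coeffOne := by rw [hw, coeffDeriv_coeffPrimitive]
  have hDDw : coeffDeriv (coeffDeriv (w b)) = 0 := by
    rw [hDw, map_smul, coeffDeriv_coeffOne, smul_zero]
  rw [taylorSum, exp_smul_apply_of_apply_apply_eq_zero hDDw, hDw, hw, map_add,
    coeffEval_coeffPrimitive, map_smul, map_smul, coeffEval_coeffOne, smul_eq_mul, smul_eq_mul,
    mul_one]

end TaylorSum

/-! ### The characteristic initial value problem -/

section Goursat

/-- Coordinates `(a, b) = ((1 - k) x + (1 + k) y - a₀, y - x)` in which `∂ₓ + ∂ᵧ = 2 ∂ₐ`: the lines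
`b = const` are characteristic, and `k` is the slope of the transversal line `a = 0`. -/
def slantCoord (k a₀ : ℝ) (p : ℝ × ℝ) : ℝ × ℝ := ((1 - k) * p.1 + (1 + k) * p.2 - a₀, p.2 - p.1)

theorem contDiff_slantCoord (k a₀ : ℝ) {n : WithTop ℕ∞} : ContDiff ℝ n (slantCoord k a₀) := by
  unfold slantCoord
  fun_prop

theorem dirDeriv_comp_slantCoord (v : ℝ × ℝ) {G : ℝ × ℝ → ℝ} (hG : Differentiable ℝ G)
    (k a₀ : ℝ) :
    dirDeriv v (G ∘ slantCoord k a₀) = dirDeriv (slantCoord k 0 v) G ∘ slantCoord k a₀ := by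
  have hA (p : ℝ × ℝ) : HasFDerivAt (slantCoord k a₀)
      (((1 - k) • ContinuousLinearMap.fst ℝ ℝ ℝ + (1 + k) • ContinuousLinearMap.snd ℝ ℝ ℝ).prod
        (ContinuousLinearMap.snd ℝ ℝ ℝ - ContinuousLinearMap.fst ℝ ℝ ℝ)) p :=
    (((hasFDerivAt_fst.const_mul (1 - k)).add (hasFDerivAt_snd.const_mul (1 + k))).sub_const
      a₀).prodMk (hasFDerivAt_snd.sub hasFDerivAt_fst)
  rw [dirDeriv_comp v hG hA]
  simp [slantCoord]

theorem dirDeriv_taylorSum_comp_slantCoord (v : ℝ × ℝ) {w : ℝ → TaylorCoeff}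
    (hw : ContDiff ℝ 1 w) (k a₀ : ℝ) :
    dirDeriv v (taylorSum w ∘ slantCoord k a₀) = taylorSum
      (fun b => (slantCoord k 0 v).1 • coeffDeriv (w b) + (slantCoord k 0 v).2 • deriv w b) ∘
      slantCoord k a₀ := by
  rw [dirDeriv_comp_slantCoord v ((contDiff_taylorSum hw).differentiable one_ne_zero),
    dirDeriv_taylorSum _ (hw.differentiable one_ne_zero)]

theorem ellipticOp_taylorSum_comp_slantCoord {w : ℝ → TaylorCoeff} (hw : ContDiff ℝ 2 w)
    (k a₀ : ℝ) :
    ellipticOp (taylorSum w ∘ slantCoord k a₀) =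
      taylorSum (fun b => (1 + 3 * k ^ 2) • coeffDeriv (coeffDeriv (w b)) +
        (6 * k) • coeffDeriv (deriv w b) + (3 : ℝ) • deriv (deriv w) b + w b) ∘
        slantCoord k a₀ := by
  have hw₁ : ContDiff ℝ 1 (deriv w) := hw.deriv'
  have hDw₁ : ContDiff ℝ 1 fun b => coeffDeriv (w b) :=
    coeffDeriv.contDiff.comp (hw.of_le one_le_two)
  have hsnd (u v : ℝ × ℝ) : dirDeriv u (dirDeriv v (taylorSum w ∘ slantCoord k a₀)) = taylorSum
      (fun b => (slantCoord k 0 u).1 • coeffDeriv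
          ((slantCoord k 0 v).1 • coeffDeriv (w b) + (slantCoord k 0 v).2 • deriv w b) +
        (slantCoord k 0 u).2 •
          ((slantCoord k 0 v).1 • coeffDeriv (deriv w b) +
            (slantCoord k 0 v).2 • deriv (deriv w) b)) ∘ slantCoord k a₀ := by
    rw [dirDeriv_taylorSum_comp_slantCoord v (hw.of_le one_le_two),
      dirDeriv_taylorSum_comp_slantCoord u ((hDw₁.const_smul _).add (hw₁.const_smul _))]
    congr! 5 with b
    have hDw := coeffDeriv.hasFDerivAt.comp_hasDerivAt b
      (hw.differentiable two_ne_zero b).hasDerivAt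
    exact ((hDw.fun_const_smul _).fun_add
      ((hw₁.differentiable one_ne_zero b).hasDerivAt.fun_const_smul _)).deriv
  ext p
  simp only [ellipticOp, hsnd, Pi.add_apply, Pi.sub_apply, Function.comp_apply, taylorSum, map_add,
    map_smul, slantCoord, smul_eq_mul]
  ring

/-- The right-hand side of the equation `w'' = …` for the Taylor coefficients `w` of `∂ₐF` along
`a = 0`, where `F` solves the kernel equation in the coordinates `slantCoord k a₀` and has the
value `c` on `a = 0`. -/
def goursatRHS (lam k c : ℝ) (w w' : TaylorCoeff) : TaylorCoeff :=
  (lam / 6) • coeffPrimitive c w - (1 / 3 : ℝ) • w -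
    ((1 + 3 * k ^ 2) / 3) • coeffDeriv (coeffDeriv w) - (2 * k) • coeffDeriv w'

theorem exists_goursat (lam k c : ℝ) {g : ℝ → ℝ} (hg : ContDiff ℝ 3 g) :
    ∃ w : ℝ → TaylorCoeff, ContDiff ℝ 3 w ∧ w 0 = 0 ∧ deriv w 0 = c • coeffOne ∧
      ∀ b, HasDerivAt (deriv w) (goursatRHS lam k (g b) (w b) (deriv w b)) b := by
  obtain ⟨w, hw, hw0, hw0', hode⟩ := exists_hasDerivAt_linear_second_order
    ((lam / 6) • coeffIntegral - (1 / 3 : ℝ) • ContinuousLinearMap.id ℝ TaylorCoeff -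
      ((1 + 3 * k ^ 2) / 3) • (coeffDeriv ∘L coeffDeriv)) (-(2 * k) • coeffDeriv)
    0 (c • coeffOne) (f := fun b => (lam / 6 * g b) • coeffOne) (n := 2)
    ((contDiff_const.mul (hg.of_le (by norm_num))).smul contDiff_const)
  refine ⟨w, hw, hw0, hw0', fun b => (hode b).congr_deriv ?_⟩
  simp only [goursatRHS, coeffPrimitive, sub_apply,
    smul_apply, ContinuousLinearMap.id_apply, ContinuousLinearMap.comp_apply]
  module

/-- In the coordinates `slantCoord k a₀`, the function with `∂ₐ`-derivative `taylorSum w` and with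
value `g` on the line `a = 0`. -/
def goursatFun (g : ℝ → ℝ) (w : ℝ → TaylorCoeff) (k a₀ : ℝ) : ℝ × ℝ → ℝ :=
  (taylorSum fun b => coeffPrimitive (g b) (w b)) ∘ slantCoord k a₀

variable {g : ℝ → ℝ} {w : ℝ → TaylorCoeff}

theorem contDiff_coeffPrimitive {n : WithTop ℕ∞} (hg : ContDiff ℝ n g) (hw : ContDiff ℝ n w) :
    ContDiff ℝ n fun b => coeffPrimitive (g b) (w b) :=
  (hg.smul contDiff_const).add (coeffIntegral.contDiff.comp hw)

theorem contDiff_goursatFun {n : WithTop ℕ∞} (hg : ContDiff ℝ n g) (hw : ContDiff ℝ n w)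
    (k a₀ : ℝ) : ContDiff ℝ n (goursatFun g w k a₀) :=
  (contDiff_taylorSum (contDiff_coeffPrimitive hg hw)).comp (contDiff_slantCoord k a₀)

theorem dirDeriv_goursatFun (hg : ContDiff ℝ 1 g) (hw : ContDiff ℝ 1 w) (k a₀ : ℝ) (v : ℝ × ℝ) :
    dirDeriv v (goursatFun g w k a₀) = taylorSum
      (fun b => (slantCoord k 0 v).1 • w b +
        (slantCoord k 0 v).2 • coeffPrimitive (deriv g b) (deriv w b)) ∘ slantCoord k a₀ := by
  rw [goursatFun, dirDeriv_taylorSum_comp_slantCoord v (contDiff_coeffPrimitive hg hw)]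
  congr! 4 with b
  · rw [coeffDeriv_coeffPrimitive]
  · exact congrArg _ (((hg.differentiable one_ne_zero b).hasDerivAt.smul_const coeffOne).fun_add
      (coeffIntegral.hasFDerivAt.comp_hasDerivAt b
        (hw.differentiable one_ne_zero b).hasDerivAt)).deriv

theorem kernelOp_goursatFun {lam k : ℝ} (a₀ : ℝ) (hg : ContDiff ℝ 3 g) (hw : ContDiff ℝ 3 w)
    (hode : ∀ b, HasDerivAt (deriv w) (goursatRHS lam k (g b) (w b) (deriv w b)) b) :
    kernelOp (goursatFun g w k a₀) = lam • goursatFun g w k a₀ := by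
  have hdiag : dirDeriv (1, 1) (goursatFun g w k a₀) =
      (2 : ℝ) • (taylorSum w ∘ slantCoord k a₀) := by
    rw [dirDeriv_goursatFun (hg.of_le (by norm_num)) (hw.of_le (by norm_num))]
    ext p
    simp only [Pi.smul_apply, Function.comp_apply, taylorSum, map_add, map_smul, slantCoord]
    norm_num
  rw [kernelOp_eq_ellipticOp (contDiff_goursatFun hg hw k a₀), hdiag, ellipticOp_const_smul,
    ellipticOp_taylorSum_comp_slantCoord (hw.of_le (by norm_num))]
  ext p
  simp only [goursatFun, (hode _).deriv, goursatRHS, Pi.smul_apply, Function.comp_apply, taylorSum,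
    map_add, map_sub, map_smul, smul_eq_mul]
  ring

theorem goursatFun_of_slantCoord_fst_eq_zero {k a₀ : ℝ} {p : ℝ × ℝ}
    (hp : (slantCoord k a₀ p).1 = 0) : goursatFun g w k a₀ p = g (p.2 - p.1) := by
  have hslant : slantCoord k a₀ p = (0, p.2 - p.1) := Prod.ext hp rfl
  rw [goursatFun, Function.comp_apply, hslant, taylorSum_zero_left, coeffEval_coeffPrimitive]

theorem goursatFun_diagonal (hw0 : w 0 = 0) (k a₀ x : ℝ) :
    goursatFun g w k a₀ (x, x) = g 0 := by
  have hslant : slantCoord k a₀ (x, x) = (2 * x - a₀, 0) := by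
    simp only [slantCoord, sub_self]
    ring_nf
  rw [goursatFun, Function.comp_apply, hslant,
    taylorSum_of_eq_coeffPrimitive (c := g 0) (d := 0) (by rw [hw0, zero_smul]), mul_zero, add_zero]

theorem dirDeriv_goursatFun_diagonal {c : ℝ} (hg : ContDiff ℝ 1 g) (hw : ContDiff ℝ 1 w)
    (hw0 : w 0 = 0) (hw0' : deriv w 0 = c • coeffOne) (k a₀ : ℝ) (v : ℝ × ℝ) (x : ℝ) :
    dirDeriv v (goursatFun g w k a₀) (x, x) =
      (v.2 - v.1) * (deriv g 0 + c * (2 * x - a₀)) := by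
  have hslant : slantCoord k a₀ (x, x) = (2 * x - a₀, 0) := by
    simp only [slantCoord, sub_self]
    ring_nf
  have hprim : taylorSum (fun b => coeffPrimitive (deriv g b) (deriv w b)) (2 * x - a₀, 0) =
      deriv g 0 + (2 * x - a₀) * c := taylorSum_of_eq_coeffPrimitive (by rw [hw0']) _
  rw [taylorSum] at hprim
  rw [dirDeriv_goursatFun hg hw, Function.comp_apply, hslant, taylorSum]
  simp only [hw0, map_smul, smul_zero, zero_add, slantCoord, hprim, smul_eq_mul]
  ring

end Goursat

/-! ### Existence -/

theorem exists_isInverseControllerKernel (lam : ℝ) :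
    ∃ l, IsInverseControllerKernel lam l := by
  obtain ⟨w, hw, hw0, hw0', hode⟩ := exists_goursat lam 1 (lam / 6) (g := 0) contDiff_const
  have h0 {n : WithTop ℕ∞} : ContDiff ℝ n (0 : ℝ → ℝ) := contDiff_const
  have hL : ContDiff ℝ 3 (goursatFun 0 w 1 2) := contDiff_goursatFun h0 hw 1 2
  obtain ⟨l, hl⟩ : ∃ l, Function.uncurry l = goursatFun 0 w 1 2 :=
    ⟨_, Function.uncurry_curry _⟩
  have hlx : Function.uncurry (pdx l) = dirDeriv (1, 0) (goursatFun 0 w 1 2) :=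
    hl ▸ uncurry_pdx (hl ▸ hL.differentiable (by norm_num))
  refine ⟨l, hl ▸ hL, fun x y _ => ?_, fun x _ => ?_, fun x _ => ?_, fun x _ => ?_⟩
  · rw [kernelOp_uncurry (hl ▸ hL), hl, kernelOp_goursatFun 2 h0 hw hode, ← hl]
    rfl
  · exact (congrFun hl (x, 1)).trans
      (goursatFun_of_slantCoord_fst_eq_zero (by norm_num [slantCoord]))
  · exact (congrFun hl (x, x)).trans (goursatFun_diagonal hw0 1 2 x)
  · refine (congrFun hlx (x, x)).trans ?_
    rw [dirDeriv_goursatFun_diagonal h0 (hw.of_le (by norm_num)) hw0 hw0',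
      Pi.zero_def, deriv_const]
    ring

/-! ### A Carleman estimate for `∂̄` -/

section Dbar

open Complex

variable {F : Type*} [NormedAddCommGroup F] [NormedSpace ℂ F]

/-- Twice the Cauchy–Riemann operator, `∂₁ + i ∂_i`, which vanishes on holomorphic functions. -/
def dbar (u : ℂ → F) (ζ : ℂ) : F := dirDeriv 1 u ζ + I • dirDeriv I u ζ

theorem dirDeriv_add_I_smul_dirDeriv (e : ℂ) (u : ℂ → F) (ζ : ℂ) :
    dirDeriv e u ζ + I • dirDeriv (e * I) u ζ = (starRingEnd ℂ e) • dbar u ζ := by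
  have he : e = e.re • (1 : ℂ) + e.im • I := by simp
  have heI : e * I = (-e.im) • (1 : ℂ) + e.re • I := by apply Complex.ext <;> simp
  have hconj : starRingEnd ℂ e = (e.re : ℂ) - e.im * I := by apply Complex.ext <;> simp
  rw [heI, dbar, hconj]
  nth_rw 1 [he]
  simp only [dirDeriv_add_dir, dirDeriv_smul_dir, Pi.add_apply, Pi.smul_apply]
  simp only [← coe_smul, ofReal_neg]
  match_scalars
  · ring
  · linear_combination (e.im : ℂ) * I_sq

theorem dbar_smul {f : ℂ → ℂ} {u : ℂ → F} {ζ : ℂ} (hf : DifferentiableAt ℂ f ζ)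
    (hu : DifferentiableAt ℝ u ζ) : dbar (fun z => f z • u z) ζ = f ζ • dbar u ζ := by
  have hfderiv := ((hf.hasFDerivAt.restrictScalars ℝ).smul hu.hasFDerivAt).fderiv
  have hI : fderiv ℂ f ζ I = I * fderiv ℂ f ζ 1 := by
    rw [← smul_eq_mul, ← map_smul, smul_eq_mul, mul_one]
  simp only [dbar, dirDeriv]
  simp only [Pi.smul_def'] at hfderiv
  simp only [hfderiv, add_apply, smul_apply, ContinuousLinearMap.smulRight_apply,
    ContinuousLinearMap.coe_restrictScalars', hI]
  match_scalars
  · ring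
  · linear_combination (fderiv ℂ f ζ 1) * I_sq
  · ring

theorem integral_dirDeriv_ray {E F : Type*} [NormedAddCommGroup E] [NormedSpace ℝ E]
    [NormedAddCommGroup F] [NormedSpace ℝ F] [CompleteSpace F] {u : E → F} (hu : ContDiff ℝ 1 u)
    (x e : E) (R : ℝ) : ∫ r in (0 : ℝ)..R, dirDeriv e u (x + r • e) = u (x + R • e) - u x := by
  have hderiv (r : ℝ) : HasDerivAt (fun r => u (x + r • e)) (dirDeriv e u (x + r • e)) r :=
    hasDerivAt_comp_dirDeriv (hu.differentiable one_ne_zero)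
      (by simpa using ((hasDerivAt_id r).smul_const e).const_add x)
  have hcont : Continuous fun r : ℝ => dirDeriv e u (x + r • e) :=
    (contDiff_dirDeriv e hu (m := 0) (by simp)).continuous.comp (by fun_prop)
  simpa using intervalIntegral.integral_eq_sub_of_hasDerivAt (fun r _ => hderiv r)
    (hcont.intervalIntegrable 0 R)

theorem continuous_dirDeriv_circleMap {u : ℂ → F} (hu : ContDiff ℝ 1 u) (ζ a : ℂ) :
    Continuous fun p : ℝ × ℝ => dirDeriv (circleMap 0 1 p.2 * a) u (circleMap ζ p.1 p.2) := by
  simp only [dirDeriv, circleMap]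
  exact ((hu.continuous_fderiv one_ne_zero).comp (by fun_prop)).clm_apply (by fun_prop)

variable [CompleteSpace F]

theorem integral_dirDeriv_circleMap {u : ℂ → F} (hu : ContDiff ℝ 1 u) (ζ : ℂ) {r : ℝ}
    (hr : r ≠ 0) :
    ∫ θ in (0 : ℝ)..2 * Real.pi, dirDeriv (circleMap 0 1 θ * I) u (circleMap ζ r θ) = 0 := by
  have hcircle (θ : ℝ) : circleMap 0 r θ * I = r • (circleMap 0 1 θ * I) := by
    simp [circleMap, mul_assoc]
  have hderiv (θ : ℝ) : HasDerivAt (fun θ => u (circleMap ζ r θ))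
      (r • dirDeriv (circleMap 0 1 θ * I) u (circleMap ζ r θ)) θ :=
    (hasDerivAt_comp_dirDeriv (hu.differentiable one_ne_zero)
      (hasDerivAt_circleMap ζ r θ)).congr_deriv (by rw [hcircle, dirDeriv_smul_dir, Pi.smul_apply])
  have hcont :=
    ((continuous_dirDeriv_circleMap hu ζ I).comp (Continuous.prodMk_right r)).const_smul r
  have h := intervalIntegral.integral_eq_sub_of_hasDerivAt (fun θ _ => hderiv θ)
    (hcont.intervalIntegrable 0 (2 * Real.pi))
  rw [intervalIntegral.integral_smul, ← zero_add (2 * Real.pi), periodic_circleMap ζ r 0, sub_self,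
    zero_add] at h
  exact (smul_eq_zero.1 h).resolve_left hr

/-- In polar coordinates about `ζ`, the `∂̄`-derivative is a radial derivative, which integrates to
`-u ζ`, plus a tangential one, which integrates to zero. -/
theorem integral_conj_smul_dbar_circleMap {u : ℂ → F} (hu : ContDiff ℝ 1 u) {ζ : ℂ} {R : ℝ}
    (hR : 0 ≤ R) (hsupp : ∀ z, R ≤ ‖z - ζ‖ → u z = 0) :
    ∫ r in (0 : ℝ)..R, ∫ θ in (0 : ℝ)..2 * Real.pi,
      starRingEnd ℂ (circleMap 0 1 θ) • dbar u (circleMap ζ r θ) = -((2 * Real.pi) • u ζ) := by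
  let A (r θ : ℝ) : F := dirDeriv (circleMap 0 1 θ) u (circleMap ζ r θ)
  let B (r θ : ℝ) : F := dirDeriv (circleMap 0 1 θ * I) u (circleMap ζ r θ)
  have hA : Continuous fun p : ℝ × ℝ => A p.1 p.2 := by
    simpa using continuous_dirDeriv_circleMap hu ζ 1
  have hB : Continuous fun p : ℝ × ℝ => B p.1 p.2 := continuous_dirDeriv_circleMap hu ζ I
  have hradial (θ : ℝ) : ∫ r in (0 : ℝ)..R, A r θ = -u ζ := by
    have hray := integral_dirDeriv_ray hu ζ (circleMap 0 1 θ) R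
    rw [hsupp _ (by simp [norm_circleMap_zero, le_abs_self]), zero_sub] at hray
    simpa [A, circleMap] using hray
  have hinner (r : ℝ) : ∫ θ in (0 : ℝ)..2 * Real.pi,
      starRingEnd ℂ (circleMap 0 1 θ) • dbar u (circleMap ζ r θ) =
      (∫ θ in (0 : ℝ)..2 * Real.pi, A r θ) + I • ∫ θ in (0 : ℝ)..2 * Real.pi, B r θ := by
    have hAr : Continuous (A r) := hA.comp (Continuous.prodMk_right r)
    have hBr : Continuous (B r) := hB.comp (Continuous.prodMk_right r)
    rw [← intervalIntegral.integral_smul, ← intervalIntegral.integral_add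
      (hAr.intervalIntegrable _ _) ((hBr.fun_const_smul I).intervalIntegrable _ _)]
    simp only [A, B, dirDeriv_add_I_smul_dirDeriv]
  have hAB : ∀ r ∈ uIoc 0 R, ∫ θ in (0 : ℝ)..2 * Real.pi,
      starRingEnd ℂ (circleMap 0 1 θ) • dbar u (circleMap ζ r θ) =
      ∫ θ in (0 : ℝ)..2 * Real.pi, A r θ := fun r hr => by
    rw [hinner, integral_dirDeriv_circleMap hu ζ (uIoc_of_le hR ▸ hr).1.ne', smul_zero, add_zero]
  rw [intervalIntegral.integral_congr_ae (ae_of_all _ hAB), intervalIntegral_intervalIntegral_swap]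
  · simp [hradial]
  · exact (hA.continuousOn.integrableOn_compact (isCompact_Icc.prod isCompact_Icc)).mono_set
      (prod_mono uIoc_subset_uIcc uIoc_subset_uIcc)

theorem norm_le_of_norm_dbar_le {u : ℂ → F} (hu : ContDiff ℝ 1 u) {ζ : ℂ} {R M : ℝ} (hR : 0 ≤ R)
    (hsupp : ∀ z, R ≤ ‖z - ζ‖ → u z = 0) (hM : ∀ z, ‖dbar u z‖ ≤ M) : ‖u ζ‖ ≤ R * M := by
  have hpi := Real.two_pi_pos
  have hinner (r : ℝ) : ‖∫ θ in (0 : ℝ)..2 * Real.pi,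
      starRingEnd ℂ (circleMap 0 1 θ) • dbar u (circleMap ζ r θ)‖ ≤ M * |2 * Real.pi - 0| :=
    intervalIntegral.norm_integral_le_of_norm_le_const fun θ _ => by
      simpa [norm_smul] using hM _
  have h := intervalIntegral.norm_integral_le_of_norm_le_const (a := 0) (b := R)
    fun r _ => hinner r
  rw [integral_conj_smul_dbar_circleMap hu hR hsupp, norm_neg, norm_smul, sub_zero, sub_zero,
    Real.norm_of_nonneg hpi.le, abs_of_pos hpi, abs_of_nonneg hR] at h
  exact le_of_mul_le_mul_left (by linarith) hpi

end Dbar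

section ExtensionByZero

open scoped Manifold ContDiff

variable {E F : Type*} [NormedAddCommGroup E] [NormedSpace ℝ E] [NormedAddCommGroup F]
  [NormedSpace ℝ F] {s : Set E} {f : E → F}

theorem hasFDerivAt_indicator (hf : Differentiable ℝ f) (h0 : ∀ x ∈ frontier s, f x = 0)
    (h1 : ∀ x ∈ frontier s, fderiv ℝ f x = 0) (x : E) :
    HasFDerivAt (s.indicator f) (s.indicator (fderiv ℝ f) x) x := by
  by_cases hx : x ∈ frontier s
  · have hfx : s.indicator f x = 0 := by simp [h0 x hx]
    have hfx' : s.indicator (fderiv ℝ f) x = 0 := by simp [h1 x hx]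
    have ho := (hf x).hasFDerivAt.isLittleO
    rw [h0 x hx, h1 x hx] at ho
    rw [hfx', hasFDerivAt_iff_isLittleO, hfx]
    refine (Asymptotics.IsBigO.of_bound 1 (Eventually.of_forall fun y => ?_)).trans_isLittleO ho
    simpa using norm_indicator_le_norm_self f y
  by_cases hxs : x ∈ s
  · have hmem : s ∈ 𝓝 x := mem_interior_iff_mem_nhds.1 <| not_not.1 fun h =>
      hx ⟨subset_closure hxs, h⟩
    rw [indicator_of_mem hxs]
    exact (hf x).hasFDerivAt.congr_of_eventuallyEq
      (mem_of_superset hmem fun y hy => indicator_of_mem hy f)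
  · have hmem : sᶜ ∈ 𝓝 x := mem_interior_iff_mem_nhds.1 <| not_not.1 fun h =>
      hx (frontier_compl s ▸ ⟨subset_closure hxs, h⟩)
    rw [indicator_of_notMem hxs]
    exact (hasFDerivAt_const 0 x).congr_of_eventuallyEq
      (mem_of_superset hmem fun y hy => indicator_of_notMem hy f)

theorem contDiff_one_indicator (hf : ContDiff ℝ 1 f) (h0 : ∀ x ∈ frontier s, f x = 0)
    (h1 : ∀ x ∈ frontier s, fderiv ℝ f x = 0) : ContDiff ℝ 1 (s.indicator f) :=
  contDiff_one_iff_hasFDerivAt.2 ⟨s.indicator (fderiv ℝ f),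
    continuous_indicator h1 (hf.continuous_fderiv one_ne_zero).continuousOn,
    hasFDerivAt_indicator (hf.differentiable one_ne_zero) h0 h1⟩

theorem exists_contDiff_cutoff [FiniteDimensional ℝ E] {s t : Set E} (hs : IsClosed s)
    (ht : IsClosed t) (hst : Disjoint s t) :
    ∃ χ : E → ℝ, ContDiff ℝ ∞ χ ∧ (∀ x ∈ s, χ =ᶠ[𝓝 x] 0) ∧ ∀ x ∈ t, χ =ᶠ[𝓝 x] 1 := by
  obtain ⟨χ, h0, h1, -⟩ := exists_contMDiffMap_zero_one_nhds_of_isClosed (n := ⊤) 𝓘(ℝ, E) hs ht hst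
  exact ⟨χ, χ.contMDiff.contDiff, eventually_nhdsSet_iff_forall.1 h0,
    eventually_nhdsSet_iff_forall.1 h1⟩

end ExtensionByZero

section Sector

open Complex

variable {F : Type*} [NormedAddCommGroup F] [NormedSpace ℂ F]

/-- The part of the vertical strip `0 ≤ re ζ ≤ ρ` on which the weight `re ζ²` of the Carleman
estimate is at least `c`. -/
def carlemanSector (ρ c : ℝ) : Set ℂ := {ζ | 0 ≤ ζ.re ∧ ζ.re ≤ ρ ∧ c ≤ (ζ ^ 2).re}

theorem re_sq_eq (ζ : ℂ) : (ζ ^ 2).re = ζ.re ^ 2 - ζ.im ^ 2 := by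
  rw [sq, mul_re]
  ring

theorem abs_im_le_of_mem_carlemanSector {ρ c : ℝ} (hc : 0 ≤ c) {ζ : ℂ}
    (hζ : ζ ∈ carlemanSector ρ c) : |ζ.im| ≤ ζ.re := by
  have h := hc.trans hζ.2.2
  rw [re_sq_eq, sub_nonneg] at h
  exact abs_le_of_sq_le_sq h hζ.1

theorem norm_le_of_mem_carlemanSector {ρ c : ℝ} (hc : 0 ≤ c) {ζ : ℂ}
    (hζ : ζ ∈ carlemanSector ρ c) : ‖ζ‖ ≤ 2 * ρ := by
  have h := norm_le_abs_re_add_abs_im ζ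
  rw [abs_of_nonneg hζ.1] at h
  linarith [abs_im_le_of_mem_carlemanSector hc hζ, hζ.2.1]

theorem carlemanSector_subset {ρ c c' : ℝ} (hcc' : c' ≤ c) :
    carlemanSector ρ c ⊆ carlemanSector ρ c' :=
  fun _ hζ => ⟨hζ.1, hζ.2.1, hcc'.trans hζ.2.2⟩

theorem isClosed_carlemanSector (ρ c : ℝ) : IsClosed (carlemanSector ρ c) :=
  (isClosed_le continuous_const continuous_re).inter <|
    (isClosed_le continuous_re continuous_const).inter <|
      isClosed_le continuous_const (continuous_re.comp (continuous_pow 2))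

theorem isCompact_carlemanSector (ρ : ℝ) {c : ℝ} (hc : 0 ≤ c) :
    IsCompact (carlemanSector ρ c) :=
  (isCompact_closedBall 0 (2 * ρ)).of_isClosed_subset (isClosed_carlemanSector ρ c) fun _ hζ =>
    mem_closedBall_zero_iff.2 (norm_le_of_mem_carlemanSector hc hζ)

theorem dbar_congr {u v : ℂ → F} {ζ : ℂ} (h : u =ᶠ[𝓝 ζ] v) : dbar u ζ = dbar v ζ := by
  simp only [dbar, dirDeriv, h.fderiv_eq]

theorem continuous_dbar {u : ℂ → F} (hu : ContDiff ℝ 1 u) : Continuous (dbar u) :=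
  have hdir (v : ℂ) : Continuous (dirDeriv v u) :=
    (hu.continuous_fderiv one_ne_zero).clm_apply continuous_const
  (hdir 1).add ((hdir I).const_smul I)

theorem exists_contDiff_cutoff_carlemanSector {c : ℝ} (hc : 0 < c) :
    ∃ χ : ℂ → ℝ, ContDiff ℝ 1 χ ∧ (∀ ζ : ℂ, ζ.re ≤ 0 ∨ (ζ ^ 2).re ≤ c / 2 → χ =ᶠ[𝓝 ζ] 0) ∧
      ∀ ρ, ∀ ζ ∈ carlemanSector ρ c, χ =ᶠ[𝓝 ζ] 1 := by
  have hcont : Continuous fun ζ : ℂ => (ζ ^ 2).re := by fun_prop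
  have hdisj : Disjoint {ζ : ℂ | ζ.re ≤ 0 ∨ (ζ ^ 2).re ≤ c / 2}
      {ζ : ℂ | 0 ≤ ζ.re ∧ c ≤ (ζ ^ 2).re} := by
    refine disjoint_left.2 fun ζ hζ hζ' => ?_
    have hsq := hζ'.2
    rw [re_sq_eq] at hsq
    rcases hζ with hre | hre
    · nlinarith [le_antisymm hre hζ'.1, sq_nonneg ζ.im]
    · linarith [hζ'.2]
  obtain ⟨χ, hχ, hχ0, hχ1⟩ := exists_contDiff_cutoff
    ((isClosed_le continuous_re continuous_const).union (isClosed_le hcont continuous_const))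
    ((isClosed_le continuous_const continuous_re).inter (isClosed_le continuous_const hcont)) hdisj
  exact ⟨χ, hχ.of_le (by simp), hχ0, fun ρ ζ hζ => hχ1 ζ ⟨hζ.1, hζ.2.2⟩⟩

theorem exists_extension_carlemanSector {u : ℂ → F} (hu : ContDiff ℝ 1 u) {ρ c : ℝ}
    (h0 : ∀ ζ : ℂ, ζ.re = ρ → 0 < (ζ ^ 2).re → u ζ = 0)
    (h1 : ∀ ζ : ℂ, ζ.re = ρ → 0 < (ζ ^ 2).re → fderiv ℝ u ζ = 0) (hc : 0 < c) :
    ∃ g : ℂ → F, ContDiff ℝ 1 g ∧ EqOn g u (carlemanSector ρ c) ∧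
      EqOn (dbar g) (dbar u) (carlemanSector ρ c) ∧ EqOn g 0 (carlemanSector ρ (c / 2))ᶜ := by
  obtain ⟨χ, hχ, hχ0, hχ1⟩ := exists_contDiff_cutoff_carlemanSector hc
  have hχu : ContDiff ℝ 1 fun ζ => χ ζ • u ζ := hχ.smul hu
  have hχu0 (ζ : ℂ) (hζ : ζ.re ≤ 0 ∨ (ζ ^ 2).re ≤ c / 2) : (fun z => χ z • u z) =ᶠ[𝓝 ζ] 0 :=
    (hχ0 ζ hζ).mono fun z hz => by simp only [hz, Pi.zero_apply, zero_smul]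
  have hχu1 (ζ : ℂ) (hζ : ζ ∈ carlemanSector ρ c) : (fun z => χ z • u z) =ᶠ[𝓝 ζ] u :=
    (hχ1 ρ ζ hζ).mono fun z hz => by simp only [hz, Pi.one_apply, one_smul]
  have hfrontier (ζ : ℂ) (hζ : ζ ∈ frontier {z : ℂ | z.re ≤ ρ}) :
      χ ζ • u ζ = 0 ∧ fderiv ℝ (fun z => χ z • u z) ζ = 0 := by
    have hre : ζ.re = ρ := (frontier_setOfPred_re_le ρ).subset hζ
    rcases le_or_gt (ζ ^ 2).re (c / 2) with hle | hlt
    · exact ⟨(hχu0 ζ (.inr hle)).eq_of_nhds, by rw [(hχu0 ζ (.inr hle)).fderiv_eq]; simp⟩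
    · have hpos : 0 < (ζ ^ 2).re := by linarith
      rw [fderiv_fun_smul (hχ.differentiable one_ne_zero ζ) (hu.differentiable one_ne_zero ζ),
        h0 ζ hre hpos, h1 ζ hre hpos]
      simp
  have hfderiv := hasFDerivAt_indicator (hχu.differentiable one_ne_zero)
    (fun ζ hζ => (hfrontier ζ hζ).1) fun ζ hζ => (hfrontier ζ hζ).2
  refine ⟨{z : ℂ | z.re ≤ ρ}.indicator fun z => χ z • u z, contDiff_one_indicator hχu
    (fun ζ hζ => (hfrontier ζ hζ).1) fun ζ hζ => (hfrontier ζ hζ).2, fun ζ hζ => ?_, fun ζ hζ => ?_,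
    fun ζ hζ => ?_⟩
  · exact (indicator_of_mem (s := {z : ℂ | z.re ≤ ρ}) hζ.2.1 _).trans (hχu1 ζ hζ).eq_of_nhds
  · rw [← dbar_congr (hχu1 ζ hζ)]
    simp only [dbar, dirDeriv, (hfderiv ζ).fderiv]
    rw [indicator_of_mem (s := {z : ℂ | z.re ≤ ρ}) hζ.2.1]
  · refine indicator_apply_eq_zero.2 fun hre => (hχu0 ζ ?_).eq_of_nhds
    by_contra! h
    exact hζ ⟨h.1.le, hre, h.2.le⟩

variable [CompleteSpace F]

theorem norm_exp_mul_sq (τ : ℝ) (ζ : ℂ) : ‖exp (τ * ζ ^ 2)‖ = Real.exp (τ * (ζ ^ 2).re) := by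
  rw [norm_exp, re_ofReal_mul]

theorem exists_carleman_estimate {g : ℂ → F} (hg : ContDiff ℝ 1 g) {ρ c' : ℝ} (hρ : 0 ≤ ρ)
    (hc' : 0 ≤ c') (hsupp : EqOn g 0 (carlemanSector ρ c')ᶜ) :
    ∃ C, ∀ c τ B : ℝ, 0 ≤ τ → 0 ≤ B →
      (∀ ζ ∈ carlemanSector ρ c, Real.exp (τ * (ζ ^ 2).re) * ‖dbar g ζ‖ ≤ B) →
      ∀ ζ ∈ carlemanSector ρ c', Real.exp (τ * (ζ ^ 2).re) * ‖g ζ‖ ≤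
        (4 * ρ + 1) * (B + C * Real.exp (τ * c)) := by
  obtain ⟨C, hC⟩ := (isCompact_carlemanSector ρ hc').exists_bound_of_continuousOn
    (continuous_dbar hg).continuousOn
  have hsupp' (ζ : ℂ) (hζ : ζ ∉ carlemanSector ρ c') : dbar g ζ = 0 := by
    rw [dbar_congr (v := 0) (mem_of_superset
      ((isClosed_carlemanSector ρ c').isOpen_compl.mem_nhds hζ) hsupp)]
    simp [dbar, dirDeriv]
  refine ⟨max C 0, fun c τ B hτ hB hbound ζ₀ hζ₀ => ?_⟩
  have hexp : Differentiable ℂ fun z : ℂ => exp (τ * z ^ 2) := by fun_prop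
  have hexpg : ContDiff ℝ 1 fun z : ℂ => exp (τ * z ^ 2) • g z :=
    ((hexp.contDiff (n := 1)).restrict_scalars ℝ).smul hg
  rw [← norm_exp_mul_sq, ← norm_smul]
  refine norm_le_of_norm_dbar_le hexpg (by positivity) (fun z hz => ?_) fun z => ?_
  · have hz' : z ∉ carlemanSector ρ c' := fun hmem => by
      linarith [norm_sub_le z ζ₀, norm_le_of_mem_carlemanSector hc' hmem,
        norm_le_of_mem_carlemanSector hc' hζ₀]
    rw [hsupp hz', Pi.zero_apply, smul_zero]
  · have hCexp : 0 ≤ max C 0 * Real.exp (τ * c) := by positivity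
    rw [dbar_smul (hexp z) (hg.differentiable one_ne_zero z), norm_smul, norm_exp_mul_sq]
    by_cases hz' : z ∈ carlemanSector ρ c'
    swap
    · rw [hsupp' z hz', norm_zero, mul_zero]
      positivity
    by_cases hz : z ∈ carlemanSector ρ c
    · exact (hbound z hz).trans (le_add_of_nonneg_right hCexp)
    have hzc : (z ^ 2).re ≤ c := le_of_not_ge fun h => hz ⟨hz'.1, hz'.2.1, h⟩
    calc Real.exp (τ * (z ^ 2).re) * ‖dbar g z‖
        ≤ Real.exp (τ * c) * max C 0 := by
          gcongr
          exact (hC z hz').trans (le_max_left _ _)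
      _ ≤ B + max C 0 * Real.exp (τ * c) := by linarith

/-- The error `C * M / τ` in `hest` is absorbed by the left-hand side of the Carleman estimate as
soon as `τ` is large. -/
theorem eventually_exp_mul_norm_le_of_dbar_estimate {u : ℂ → F} (hu : ContDiff ℝ 1 u) {ρ c C : ℝ}
    (hρ : 0 ≤ ρ) (hc : 0 < c)
    (h0 : ∀ ζ : ℂ, ζ.re = ρ → 0 < (ζ ^ 2).re → u ζ = 0)
    (h1 : ∀ ζ : ℂ, ζ.re = ρ → 0 < (ζ ^ 2).re → fderiv ℝ u ζ = 0)
    (hest : ∀ τ > 0, ∀ M ≥ 0,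
      (∀ ζ ∈ carlemanSector ρ c, Real.exp (τ * (ζ ^ 2).re) * ‖u ζ‖ ≤ M) →
      ∀ ζ ∈ carlemanSector ρ c, Real.exp (τ * (ζ ^ 2).re) * ‖dbar u ζ‖ ≤ C / τ * M) :
    ∃ K, ∀ᶠ τ in atTop, ∀ ζ ∈ carlemanSector ρ c,
      Real.exp (τ * (ζ ^ 2).re) * ‖u ζ‖ ≤ K * Real.exp (τ * c) := by
  obtain ⟨g, hg, hgu, hdgu, hg0⟩ := exists_extension_carlemanSector hu h0 h1 hc
  obtain ⟨C', hC'⟩ := exists_carleman_estimate hg hρ (half_pos hc).le hg0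
  refine ⟨2 * ((4 * ρ + 1) * C'), ?_⟩
  filter_upwards [eventually_gt_atTop 0, eventually_ge_atTop (2 * ((4 * ρ + 1) * |C|))]
    with τ hτ hτC ζ hζ
  have hcont : Continuous fun z : ℂ => Real.exp (τ * (z ^ 2).re) * ‖u z‖ :=
    Continuous.mul (by fun_prop) hu.continuous.norm
  obtain ⟨ζmax, hmem, hmax⟩ := (isCompact_carlemanSector ρ hc.le).exists_isMaxOn ⟨ζ, hζ⟩
    hcont.continuousOn
  refine (hmax hζ).trans ?_
  set M := Real.exp (τ * (ζmax ^ 2).re) * ‖u ζmax‖ with hM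
  have hM0 : 0 ≤ M := by positivity
  have hdbar (z : ℂ) (hz : z ∈ carlemanSector ρ c) :
      Real.exp (τ * (z ^ 2).re) * ‖dbar g z‖ ≤ |C| / τ * M := by
    rw [hdgu hz]
    refine (hest τ hτ M hM0 (fun _ hz => hmax hz) z hz).trans ?_
    gcongr
    exact le_abs_self C
  have hcarleman := hC' c τ (|C| / τ * M) hτ.le (by positivity) hdbar ζmax
    (carlemanSector_subset (by linarith) hmem)
  rw [hgu hmem, ← hM] at hcarleman
  have habsorb : (4 * ρ + 1) * (|C| / τ * M) ≤ 1 / 2 * M := by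
    rw [← mul_assoc, ← mul_div_assoc]
    refine mul_le_mul_of_nonneg_right ?_ hM0
    rw [div_le_div_iff₀ hτ two_pos]
    linarith
  linarith

theorem eq_zero_of_dbar_estimate {u : ℂ → F} (hu : ContDiff ℝ 1 u) {ρ : ℝ}
    (h0 : ∀ ζ : ℂ, ζ.re = ρ → 0 < (ζ ^ 2).re → u ζ = 0)
    (h1 : ∀ ζ : ℂ, ζ.re = ρ → 0 < (ζ ^ 2).re → fderiv ℝ u ζ = 0)
    (hest : ∀ c > 0, ∃ C, ∀ τ > 0, ∀ M ≥ 0,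
      (∀ ζ ∈ carlemanSector ρ c, Real.exp (τ * (ζ ^ 2).re) * ‖u ζ‖ ≤ M) →
      ∀ ζ ∈ carlemanSector ρ c, Real.exp (τ * (ζ ^ 2).re) * ‖dbar u ζ‖ ≤ C / τ * M)
    {c : ℝ} (hc : 0 < c) {ζ : ℂ} (hζ : ζ ∈ carlemanSector ρ c) : u ζ = 0 := by
  obtain ⟨C, hC⟩ := hest (c / 2) (half_pos hc)
  obtain ⟨K, hK⟩ := eventually_exp_mul_norm_le_of_dbar_estimate hu (hζ.1.trans hζ.2.1)
    (half_pos hc) h0 h1 hC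
  have hdecay : Tendsto (fun τ => |K| * Real.exp (-τ * (c / 2))) atTop (𝓝 0) := by
    simpa using (Real.tendsto_exp_atBot.comp
      (tendsto_neg_atTop_atBot.atBot_mul_const (half_pos hc))).const_mul |K|
  refine norm_le_zero_iff.1 (ge_of_tendsto hdecay ?_)
  filter_upwards [hK, eventually_ge_atTop 0] with τ hτ hτ0
  refine le_of_mul_le_mul_left ?_ (Real.exp_pos (τ * c))
  calc Real.exp (τ * c) * ‖u ζ‖ ≤ Real.exp (τ * (ζ ^ 2).re) * ‖u ζ‖ := by
        gcongr
        exact hζ.2.2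
    _ ≤ K * Real.exp (τ * (c / 2)) := hτ ζ (carlemanSector_subset (by linarith) hζ)
    _ ≤ |K| * Real.exp (τ * (c / 2)) := by
        gcongr
        exact le_abs_self K
    _ = Real.exp (τ * c) * (|K| * Real.exp (-τ * (c / 2))) := by
        rw [mul_left_comm, ← Real.exp_add]
        ring_nf

end Sector

/-! ### Unique continuation from a half-sector -/

section

variable {E F : Type*} [NormedAddCommGroup E] [NormedSpace ℝ E] [NormedAddCommGroup F]
  [NormedSpace ℝ F]

theorem dirDeriv_eq_zero_of_eventually {f : E → F} {v x : E} (hf : DifferentiableAt ℝ f x)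
    (h : ∀ᶠ r : ℝ in 𝓝 0, f (x + r • v) = 0) : dirDeriv v f x = 0 :=
  (hf.hasFDerivAt.hasLineDerivAt v).unique <|
    (hasDerivAt_const 0 (0 : F)).congr_of_eventuallyEq h

theorem norm_integral_le_of_norm_le_exp {f : ℝ → F} {A k R : ℝ} (hA : 0 ≤ A) (hk : 0 < k)
    (hR : 0 ≤ R) (hf : ∀ r ∈ Ioc 0 R, ‖f r‖ ≤ A * Real.exp (-(k * r))) :
    ‖∫ r in 0..R, f r‖ ≤ A / k := by
  have hprim (r : ℝ) :
      HasDerivAt (fun r => -(A / k * Real.exp (-(k * r)))) (A * Real.exp (-(k * r))) r := by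
    have hlin : HasDerivAt (fun r => -(k * r)) (-k) r := by
      simpa using ((hasDerivAt_id r).const_mul k).fun_neg
    refine (hlin.exp.const_mul (A / k)).fun_neg.congr_deriv ?_
    field_simp
  have hint : IntervalIntegrable (fun r => A * Real.exp (-(k * r))) volume 0 R :=
    Continuous.intervalIntegrable (by fun_prop) 0 R
  calc ‖∫ r in 0..R, f r‖ ≤ ∫ r in 0..R, A * Real.exp (-(k * r)) :=
        intervalIntegral.norm_integral_le_of_norm_le hR (ae_of_all _ hf) hint
    _ = A / k - A / k * Real.exp (-(k * R)) := by
        rw [intervalIntegral.integral_eq_sub_of_hasDerivAt (fun r _ => hprim r) hint]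
        simp
        ring
    _ ≤ A / k := sub_le_self _ (by positivity)

end

section

open Complex

section

variable {F : Type*} [NormedAddCommGroup F] [NormedSpace ℝ F] [CompleteSpace F] {f : ℂ → F}
  {ρ c τ M : ℝ}

theorem exp_mul_norm_le_of_dirDeriv_one (hf : ContDiff ℝ 1 f) (hc : 0 < c) (hτ : 0 < τ)
    (hM : 0 ≤ M) (h0 : ∀ ζ : ℂ, ζ.re = ρ → 0 < (ζ ^ 2).re → f ζ = 0)
    (hbound : ∀ ζ ∈ carlemanSector ρ c, Real.exp (τ * (ζ ^ 2).re) * ‖dirDeriv 1 f ζ‖ ≤ M)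
    {ζ : ℂ} (hζ : ζ ∈ carlemanSector ρ c) :
    Real.exp (τ * (ζ ^ 2).re) * ‖f ζ‖ ≤ M / (τ * (2 * √c)) := by
  have hre : √c ≤ ζ.re := by
    refine Real.sqrt_le_iff.2 ⟨hζ.1, ?_⟩
    have h := hζ.2.2
    rw [re_sq_eq] at h
    linarith [sq_nonneg ζ.im]
  have hgain (r : ℝ) (hr : 0 ≤ r) : (ζ ^ 2).re + 2 * √c * r ≤ ((ζ + r • (1 : ℂ)) ^ 2).re := by
    simp only [re_sq_eq, add_re, add_im, smul_re, smul_im, one_re, one_im, smul_eq_mul]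
    nlinarith [sq_nonneg r]
  have hR : 0 ≤ ρ - ζ.re := sub_nonneg.2 hζ.2.1
  have hend : f (ζ + (ρ - ζ.re) • (1 : ℂ)) = 0 := by
    refine h0 _ (by simp) ((hc.trans_le hζ.2.2).trans_le (le_trans ?_ (hgain _ hR)))
    exact le_add_of_nonneg_right (by positivity)
  have hray := integral_dirDeriv_ray hf ζ 1 (ρ - ζ.re)
  rw [hend, zero_sub] at hray
  have hint := norm_integral_le_of_norm_le_exp (f := fun r : ℝ => dirDeriv 1 f (ζ + r • (1 : ℂ)))
    (A := M * Real.exp (-(τ * (ζ ^ 2).re))) (k := τ * (2 * √c)) (by positivity) (by positivity)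
    hR fun r hr => ?_
  · rw [hray, norm_neg, mul_div_right_comm, Real.exp_neg, ← div_eq_mul_inv,
      le_div_iff₀ (Real.exp_pos _)] at hint
    rwa [mul_comm]
  · have hmem : ζ + r • (1 : ℂ) ∈ carlemanSector ρ c := by
      refine ⟨?_, ?_, hζ.2.2.trans (le_trans ?_ (hgain r hr.1.le))⟩
      · simpa using add_nonneg hζ.1 hr.1.le
      · simpa using (by linarith [hr.2] : ζ.re + r ≤ ρ)
      · exact le_add_of_nonneg_right (mul_nonneg (by positivity) hr.1.le)
    rw [mul_assoc, ← Real.exp_add, ← neg_add, Real.exp_neg, ← div_eq_mul_inv,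
      le_div_iff₀ (Real.exp_pos _), mul_comm]
    refine le_trans ?_ (hbound _ hmem)
    gcongr
    linarith [mul_le_mul_of_nonneg_left (hgain r hr.1.le) hτ.le]

theorem exp_mul_norm_le_of_dirDeriv_I (hf : ContDiff ℝ 1 f) (hc : 0 ≤ c) (hτ : 0 ≤ τ)
    (h0 : ∀ x : ℝ, f x = 0)
    (hbound : ∀ ζ ∈ carlemanSector ρ c, Real.exp (τ * (ζ ^ 2).re) * ‖dirDeriv I f ζ‖ ≤ M)
    {ζ : ℂ} (hζ : ζ ∈ carlemanSector ρ c) :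
    Real.exp (τ * (ζ ^ 2).re) * ‖f ζ‖ ≤ M * ρ := by
  have hray := integral_dirDeriv_ray hf (ζ.re : ℂ) I ζ.im
  rw [h0, sub_zero, real_smul, re_add_im] at hray
  have hpoint (r : ℝ) (hr : r ∈ uIoc 0 ζ.im) :
      ‖dirDeriv I f (ζ.re + r • I)‖ ≤ M / Real.exp (τ * (ζ ^ 2).re) := by
    have hr2 : r ^ 2 ≤ ζ.im ^ 2 := by
      refine sq_le_sq.2 ?_
      rcases mem_uIoc.1 hr with h | h
      · exact abs_le_abs_of_nonneg h.1.le h.2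
      · exact abs_le_abs_of_nonpos h.2 h.1.le
    have hsq : (ζ ^ 2).re ≤ (((ζ.re : ℂ) + r • I) ^ 2).re := by
      simp only [re_sq_eq, add_re, add_im, smul_re, smul_im, ofReal_re, ofReal_im, I_re, I_im,
        smul_eq_mul]
      linarith
    have hmem : (ζ.re : ℂ) + r • I ∈ carlemanSector ρ c :=
      ⟨by simpa using hζ.1, by simpa using hζ.2.1, hζ.2.2.trans hsq⟩
    rw [le_div_iff₀ (Real.exp_pos _), mul_comm]
    refine le_trans ?_ (hbound _ hmem)
    gcongr
  have hM : 0 ≤ M := (by positivity : (0 : ℝ) ≤ _).trans (hbound ζ hζ)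
  rw [← le_div_iff₀' (Real.exp_pos _), mul_div_right_comm, ← hray]
  calc ‖∫ r in 0..ζ.im, dirDeriv I f (ζ.re + r • I)‖
      ≤ M / Real.exp (τ * (ζ ^ 2).re) * |ζ.im - 0| :=
        intervalIntegral.norm_integral_le_of_norm_le_const hpoint
    _ ≤ M / Real.exp (τ * (ζ ^ 2).re) * ρ := by
        rw [sub_zero]
        gcongr
        exact (abs_im_le_of_mem_carlemanSector hc hζ).trans hζ.2.1

end

/-- Twice the Wirtinger derivative `∂v/∂ζ` of a real-valued function `v`, to which the Carleman
estimate is applied because its `∂̄`-derivative is the Laplacian of `v`. -/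
def wirtinger (v : ℂ → ℝ) (ζ : ℂ) : ℂ := dirDeriv 1 v ζ - I * dirDeriv I v ζ

variable {v : ℂ → ℝ}

theorem contDiff_wirtinger (hv : ContDiff ℝ 2 v) : ContDiff ℝ 1 (wirtinger v) :=
  (ofRealCLM.contDiff.comp (contDiff_dirDeriv 1 hv (by norm_num))).sub <|
    contDiff_const.mul (ofRealCLM.contDiff.comp (contDiff_dirDeriv I hv (by norm_num)))

theorem dirDeriv_wirtinger (hv : ContDiff ℝ 2 v) (w ζ : ℂ) :
    dirDeriv w (wirtinger v) ζ =
      (dirDeriv w (dirDeriv 1 v) ζ : ℝ) - I * (dirDeriv w (dirDeriv I v) ζ : ℝ) := by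
  have hdir (e : ℂ) : HasFDerivAt (fun z => ((dirDeriv e v z : ℝ) : ℂ))
      (ofRealCLM.comp (fderiv ℝ (dirDeriv e v) ζ)) ζ :=
    ofRealCLM.hasFDerivAt.comp ζ (differentiable_dirDeriv e hv ζ).hasFDerivAt
  change fderiv ℝ (fun z => ((dirDeriv 1 v z : ℝ) : ℂ) - I * (dirDeriv I v z : ℝ)) ζ w = _
  rw [((hdir 1).fun_sub ((hdir I).const_mul I)).fderiv]
  simp [dirDeriv]

theorem dbar_wirtinger (hv : ContDiff ℝ 2 v) (ζ : ℂ) :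
    dbar (wirtinger v) ζ =
      (dirDeriv 1 (dirDeriv 1 v) ζ + dirDeriv I (dirDeriv I v) ζ : ℝ) := by
  rw [dbar, dirDeriv_wirtinger hv, dirDeriv_wirtinger hv, dirDeriv_comm I 1 hv, ofReal_add,
    smul_eq_mul]
  linear_combination -((dirDeriv I (dirDeriv I v) ζ : ℝ) : ℂ) * I_mul_I

theorem norm_dirDeriv_one_le_norm_wirtinger (v : ℂ → ℝ) (ζ : ℂ) :
    ‖dirDeriv 1 v ζ‖ ≤ ‖wirtinger v ζ‖ := by
  simpa [wirtinger] using abs_re_le_norm (wirtinger v ζ)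

theorem dirDeriv_I_eq_zero_of_re_eq {F : Type*} [NormedAddCommGroup F] [NormedSpace ℝ F]
    {f : ℂ → F} (hf : Differentiable ℝ f) {ρ : ℝ}
    (h0 : ∀ ζ : ℂ, ζ.re = ρ → 0 < (ζ ^ 2).re → f ζ = 0) (ζ : ℂ) (hre : ζ.re = ρ)
    (hpos : 0 < (ζ ^ 2).re) : dirDeriv I f ζ = 0 := by
  refine dirDeriv_eq_zero_of_eventually (hf ζ) ?_
  have hcont : Continuous fun r : ℝ => ((ζ + r • I) ^ 2).re := by fun_prop
  have hnear : ∀ᶠ r : ℝ in 𝓝 0, 0 < ((ζ + r • I) ^ 2).re :=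
    hcont.continuousAt.eventually (lt_mem_nhds (by simpa using hpos))
  filter_upwards [hnear] with r hr
  exact h0 _ (by simpa using hre) hr

theorem wirtinger_dirDeriv_I_eq_zero_of_re_eq {V : ℂ → ℝ} (hV : ContDiff ℝ 3 V) {ρ : ℝ}
    (hV0 : ∀ ζ : ℂ, ζ.re = ρ → 0 < (ζ ^ 2).re → V ζ = 0)
    (hV1 : ∀ ζ : ℂ, ζ.re = ρ → 0 < (ζ ^ 2).re → dirDeriv 1 V ζ = 0) (ζ : ℂ) (hre : ζ.re = ρ)
    (hpos : 0 < (ζ ^ 2).re) : wirtinger (dirDeriv I V) ζ = 0 := by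
  have hV2 : ContDiff ℝ 2 V := hV.of_le (by norm_num)
  have hv0 := dirDeriv_I_eq_zero_of_re_eq (hV.differentiable (by norm_num)) hV0
  have hv1 := dirDeriv_I_eq_zero_of_re_eq (differentiable_dirDeriv 1 hV2) hV1 ζ hre hpos
  have hvI := dirDeriv_I_eq_zero_of_re_eq (differentiable_dirDeriv I hV2) hv0 ζ hre hpos
  rw [wirtinger, dirDeriv_comm 1 I hV2, hv1, hvI]
  simp

theorem fderiv_eq_zero_of_dbar_eq_zero {F : Type*} [NormedAddCommGroup F] [NormedSpace ℂ F]
    {u : ℂ → F} {ζ : ℂ} (hI : dirDeriv I u ζ = 0) (hdbar : dbar u ζ = 0) :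
    fderiv ℝ u ζ = 0 := by
  have h1 : dirDeriv 1 u ζ = 0 := by simpa [dbar, hI] using hdbar
  refine ContinuousLinearMap.ext fun z => ?_
  have hz : z = z.re • (1 : ℂ) + z.im • I := by simp
  change dirDeriv z u ζ = 0
  rw [hz, dirDeriv_add_dir, dirDeriv_smul_dir, dirDeriv_smul_dir]
  simp [h1, hI]

section

variable {V : ℂ → ℝ} {ρ C c : ℝ}

theorem exp_mul_norm_le_of_wirtinger (hV : ContDiff ℝ 3 V) (haxis : ∀ x : ℝ, V x = 0)
    (hV0 : ∀ ζ : ℂ, ζ.re = ρ → 0 < (ζ ^ 2).re → V ζ = 0) {τ M : ℝ} (hc : 0 < c) (hτ : 0 < τ)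
    (hM : 0 ≤ M) (hu : ∀ ζ ∈ carlemanSector ρ c,
      Real.exp (τ * (ζ ^ 2).re) * ‖wirtinger (dirDeriv I V) ζ‖ ≤ M) :
    ∀ ζ ∈ carlemanSector ρ c, Real.exp (τ * (ζ ^ 2).re) * ‖dirDeriv I V ζ‖ ≤ M / (τ * (2 * √c)) ∧
      Real.exp (τ * (ζ ^ 2).re) * ‖V ζ‖ ≤ M / (τ * (2 * √c)) * ρ := by
  have hv (ζ : ℂ) (hζ : ζ ∈ carlemanSector ρ c) :
      Real.exp (τ * (ζ ^ 2).re) * ‖dirDeriv I V ζ‖ ≤ M / (τ * (2 * √c)) :=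
    exp_mul_norm_le_of_dirDeriv_one (contDiff_dirDeriv I hV (by norm_num)) hc hτ hM
      (dirDeriv_I_eq_zero_of_re_eq (hV.differentiable (by norm_num)) hV0)
      (fun z hz => le_trans (by gcongr; exact norm_dirDeriv_one_le_norm_wirtinger _ z) (hu z hz)) hζ
  exact fun ζ hζ => ⟨hv ζ hζ,
    exp_mul_norm_le_of_dirDeriv_I (hV.of_le (by norm_num)) hc.le hτ.le haxis hv hζ⟩

theorem wirtinger_dirDeriv_I_eq_zero (hV : ContDiff ℝ 3 V) (hC : 0 ≤ C)
    (haxis : ∀ x : ℝ, V x = 0) (hV0 : ∀ ζ : ℂ, ζ.re = ρ → 0 < (ζ ^ 2).re → V ζ = 0)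
    (hV1 : ∀ ζ : ℂ, ζ.re = ρ → 0 < (ζ ^ 2).re → dirDeriv 1 V ζ = 0)
    (hlap : ∀ c > 0, ∀ ζ ∈ carlemanSector ρ c,
      |dirDeriv 1 (dirDeriv 1 (dirDeriv I V)) ζ + dirDeriv I (dirDeriv I (dirDeriv I V)) ζ| ≤
        C * (|dirDeriv I V ζ| + |V ζ|))
    (hc : 0 < c) {ζ : ℂ} (hζ : ζ ∈ carlemanSector ρ c) : wirtinger (dirDeriv I V) ζ = 0 := by
  have hv : ContDiff ℝ 2 (dirDeriv I V) := contDiff_dirDeriv I hV (by norm_num)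
  have hu : ContDiff ℝ 1 (wirtinger (dirDeriv I V)) := contDiff_wirtinger hv
  have hu0 := wirtinger_dirDeriv_I_eq_zero_of_re_eq hV hV0 hV1
  have hu1 (z : ℂ) (hre : z.re = ρ) (hpos : 0 < (z ^ 2).re) :
      fderiv ℝ (wirtinger (dirDeriv I V)) z = 0 := by
    refine fderiv_eq_zero_of_dbar_eq_zero
      (dirDeriv_I_eq_zero_of_re_eq (hu.differentiable one_ne_zero) hu0 z hre hpos) ?_
    have hlapz := hlap _ hpos z ⟨hre ▸ hζ.1.trans hζ.2.1, hre.le, le_rfl⟩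
    rw [dirDeriv_I_eq_zero_of_re_eq (hV.differentiable (by norm_num)) hV0 z hre hpos,
      hV0 z hre hpos] at hlapz
    rw [dbar_wirtinger hv, ofReal_eq_zero]
    simpa using hlapz
  refine eq_zero_of_dbar_estimate hu hu0 hu1
    (fun c hc => ⟨C * (1 + ρ) / (2 * √c), fun τ hτ M hM huM z hz => ?_⟩) hc hζ
  obtain ⟨hvz, hVz⟩ := exp_mul_norm_le_of_wirtinger hV haxis hV0 hc hτ hM huM z hz
  rw [Real.norm_eq_abs] at hvz hVz
  rw [dbar_wirtinger hv, norm_real, Real.norm_eq_abs]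
  calc _ ≤ Real.exp (τ * (z ^ 2).re) * (C * (|dirDeriv I V z| + |V z|)) := by
        gcongr
        exact hlap c hc z hz
    _ ≤ C * (M / (τ * (2 * √c)) + M / (τ * (2 * √c)) * ρ) := by
        rw [mul_left_comm, mul_add]
        gcongr
    _ = C * (1 + ρ) / (2 * √c) / τ * M := by field_simp

theorem eq_zero_of_laplacian_dirDeriv_I_le (hV : ContDiff ℝ 3 V) (hC : 0 ≤ C)
    (haxis : ∀ x : ℝ, V x = 0) (hV0 : ∀ ζ : ℂ, ζ.re = ρ → 0 < (ζ ^ 2).re → V ζ = 0)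
    (hV1 : ∀ ζ : ℂ, ζ.re = ρ → 0 < (ζ ^ 2).re → dirDeriv 1 V ζ = 0)
    (hlap : ∀ c > 0, ∀ ζ ∈ carlemanSector ρ c,
      |dirDeriv 1 (dirDeriv 1 (dirDeriv I V)) ζ + dirDeriv I (dirDeriv I (dirDeriv I V)) ζ| ≤
        C * (|dirDeriv I V ζ| + |V ζ|))
    (hc : 0 < c) {ζ : ℂ} (hζ : ζ ∈ carlemanSector ρ c) : V ζ = 0 := by
  have hbound := (exp_mul_norm_le_of_wirtinger hV haxis hV0 hc one_pos le_rfl (fun z hz => by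
    simp [wirtinger_dirDeriv_I_eq_zero hV hC haxis hV0 hV1 hlap hc hz]) ζ hζ).2
  rw [zero_div, zero_mul] at hbound
  exact norm_le_zero_iff.1 (nonpos_of_mul_nonpos_right hbound (Real.exp_pos _))

end

end

section CharPoint

/-- The point of the plane with `x + y = s` and `y - x = t`. -/
def charPoint (s t : ℝ) : ℝ × ℝ := ((s - t) / 2, (s + t) / 2)

theorem contDiff_charPoint {E : Type*} [NormedAddCommGroup E] [NormedSpace ℝ E] {f g : E → ℝ}
    {n : WithTop ℕ∞} (hf : ContDiff ℝ n f) (hg : ContDiff ℝ n g) :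
    ContDiff ℝ n fun x => charPoint (f x) (g x) := by
  unfold charPoint
  fun_prop

theorem charPoint_add_sub (p : ℝ × ℝ) : charPoint (p.1 + p.2) (p.2 - p.1) = p := by
  ext <;> simp only [charPoint] <;> ring

theorem charPoint_zero_right (s : ℝ) : charPoint s 0 = (s / 2, s / 2) := by
  simp [charPoint]

theorem charPoint_mem_T_iff {s t : ℝ} : charPoint s t ∈ T ↔ t ≤ s ∧ 0 ≤ t ∧ s + t ≤ 2 := by
  change (0 ≤ (s - t) / 2 ∧ (s - t) / 2 ≤ (s + t) / 2 ∧ (s + t) / 2 ≤ 1) ↔ _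
  constructor <;> rintro ⟨h₁, h₂, h₃⟩ <;> refine ⟨?_, ?_, ?_⟩ <;> linarith

end CharPoint

section IsothermalChart

open Complex

/-- Coordinates `ζ` in which `∂ₓ² - ∂ₓ∂ᵧ + ∂ᵧ²` is the Laplacian: `im ζ = (x + y) - s₀` and
`re ζ = (r - (y - x)) / √3`, so that the diagonal is the line `re ζ = r / √3`. -/
def isothermalChart (s₀ r : ℝ) (ζ : ℂ) : ℝ × ℝ := charPoint (s₀ + ζ.im) (r - √3 * ζ.re)

theorem contDiff_isothermalChart (s₀ r : ℝ) {n : WithTop ℕ∞} :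
    ContDiff ℝ n (isothermalChart s₀ r) :=
  contDiff_charPoint (contDiff_const.add imCLM.contDiff)
    (contDiff_const.sub (contDiff_const.mul reCLM.contDiff))

theorem dirDeriv_comp_isothermalChart {G : ℝ × ℝ → ℝ} (hG : Differentiable ℝ G) (s₀ r : ℝ)
    (v : ℂ) : dirDeriv v (G ∘ isothermalChart s₀ r) =
      (dirDeriv ((v.im + √3 * v.re) / 2, (v.im - √3 * v.re) / 2) G) ∘ isothermalChart s₀ r := by
  have hchart (ζ : ℂ) : HasFDerivAt (isothermalChart s₀ r)
      (((2⁻¹ : ℝ) • (imCLM + √3 • reCLM)).prod ((2⁻¹ : ℝ) • (imCLM - √3 • reCLM))) ζ := by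
    have him : HasFDerivAt (fun z : ℂ => s₀ + z.im) imCLM ζ := imCLM.hasFDerivAt.const_add s₀
    have hre : HasFDerivAt (fun z : ℂ => r - √3 * z.re) (-(√3 • reCLM)) ζ :=
      (reCLM.hasFDerivAt.const_mul √3).const_sub r
    unfold isothermalChart charPoint
    simpa only [div_eq_inv_mul, sub_neg_eq_add, ← sub_eq_add_neg] using
      ((him.fun_sub hre).const_mul 2⁻¹).prodMk ((him.fun_add hre).const_mul 2⁻¹)
  rw [dirDeriv_comp v hG hchart]
  simp only [div_eq_inv_mul]
  rfl

theorem dirDeriv_I_comp_isothermalChart {G : ℝ × ℝ → ℝ} (hG : Differentiable ℝ G) (s₀ r : ℝ) :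
    dirDeriv I (G ∘ isothermalChart s₀ r) =
      ((1 / 2 : ℝ) • dirDeriv (1, 1) G) ∘ isothermalChart s₀ r := by
  rw [dirDeriv_comp_isothermalChart hG, ← dirDeriv_smul_dir]
  simp

theorem laplacian_comp_isothermalChart {G : ℝ × ℝ → ℝ} (hG : ContDiff ℝ 2 G) (s₀ r : ℝ) :
    dirDeriv 1 (dirDeriv 1 (G ∘ isothermalChart s₀ r)) +
        dirDeriv I (dirDeriv I (G ∘ isothermalChart s₀ r)) =
      (ellipticOp G - G) ∘ isothermalChart s₀ r := by
  have hsnd (v : ℂ) : dirDeriv v (dirDeriv v (G ∘ isothermalChart s₀ r)) =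
      (((v.im + √3 * v.re) / 2) ^ 2 • dirDeriv (1, 0) (dirDeriv (1, 0) G) +
        (2 * ((v.im + √3 * v.re) / 2 * ((v.im - √3 * v.re) / 2))) •
          dirDeriv (1, 0) (dirDeriv (0, 1) G) +
        ((v.im - √3 * v.re) / 2) ^ 2 • dirDeriv (0, 1) (dirDeriv (0, 1) G)) ∘
        isothermalChart s₀ r := by
    rw [dirDeriv_comp_isothermalChart (hG.differentiable two_ne_zero),
      dirDeriv_comp_isothermalChart (differentiable_dirDeriv _ hG), dirDeriv_dirDeriv_eq _ hG]
  have hsqrt : √3 ^ 2 = (3 : ℝ) := Real.sq_sqrt (by norm_num)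
  ext ζ
  simp only [hsnd, ellipticOp, Pi.add_apply, Pi.sub_apply, Pi.smul_apply, smul_eq_mul,
    Function.comp_apply, one_re, one_im, I_re, I_im]
  linear_combination (dirDeriv (1, 0) (dirDeriv (1, 0) G) (isothermalChart s₀ r ζ) / 4 -
    dirDeriv (1, 0) (dirDeriv (0, 1) G) (isothermalChart s₀ r ζ) / 2 +
    dirDeriv (0, 1) (dirDeriv (0, 1) G) (isothermalChart s₀ r ζ) / 4) * hsqrt

theorem laplacian_dirDeriv_I_comp_isothermalChart {H : ℝ × ℝ → ℝ} (hH : ContDiff ℝ 3 H)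
    (s₀ r : ℝ) :
    dirDeriv 1 (dirDeriv 1 (dirDeriv I (H ∘ isothermalChart s₀ r))) +
        dirDeriv I (dirDeriv I (dirDeriv I (H ∘ isothermalChart s₀ r))) =
      (1 / 2 : ℝ) • (kernelOp H ∘ isothermalChart s₀ r) -
        dirDeriv I (H ∘ isothermalChart s₀ r) := by
  have hdiag : ContDiff ℝ 2 ((1 / 2 : ℝ) • dirDeriv (1, 1) H) :=
    contDiff_const.smul (contDiff_dirDeriv (1, 1) hH (by norm_num))
  rw [dirDeriv_I_comp_isothermalChart (hH.differentiable (by norm_num)),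
    laplacian_comp_isothermalChart hdiag, ellipticOp_const_smul, ← kernelOp_eq_ellipticOp hH]
  rfl

theorem isothermalChart_mem_T {s₀ r c : ℝ} (hr : r ≤ s₀) (hr' : s₀ + r ≤ 2) (hc : 0 ≤ c) {ζ : ℂ}
    (hζ : ζ ∈ carlemanSector (r / √3) c) : isothermalChart s₀ r ζ ∈ T := by
  have him := abs_le.1 (abs_im_le_of_mem_carlemanSector hc hζ)
  have hsqrt : ζ.re ≤ √3 * ζ.re :=
    le_mul_of_one_le_left hζ.1 (Real.one_le_sqrt.2 (by norm_num))
  have hre : √3 * ζ.re ≤ r := (le_div_iff₀' (by positivity)).1 hζ.2.1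
  exact charPoint_mem_T_iff.2 ⟨by linarith [him.1], by linarith, by linarith [him.2]⟩

theorem isothermalChart_of_re_eq {s₀ r : ℝ} {ζ : ℂ} (hζ : ζ.re = r / √3) :
    isothermalChart s₀ r ζ = ((s₀ + ζ.im) / 2, (s₀ + ζ.im) / 2) := by
  rw [isothermalChart, hζ, mul_div_cancel₀ r (by positivity), sub_self, charPoint_zero_right]

theorem eq_zero_comp_isothermalChart {lam : ℝ} {H : ℝ × ℝ → ℝ} (hH : ContDiff ℝ 3 H)
    (hker : ∀ p ∈ T, kernelOp H p = lam * H p)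
    (h0 : ∀ x ∈ Ioo (0 : ℝ) 1, H (x, x) = 0) (h1 : ∀ x ∈ Ioo (0 : ℝ) 1, fderiv ℝ H (x, x) = 0)
    {s₀ r : ℝ} (hline : ∀ t, H (charPoint s₀ t) = 0) (hr0 : 0 ≤ r) (hr : r ≤ s₀)
    (hr' : s₀ + r ≤ 2) {c : ℝ} (hc : 0 < c) {ζ : ℂ} (hζ : ζ ∈ carlemanSector (r / √3) c) :
    H (isothermalChart s₀ r ζ) = 0 := by
  have hdiag (z : ℂ) (hre : z.re = r / √3) (hpos : 0 < (z ^ 2).re) :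
      (s₀ + z.im) / 2 ∈ Ioo (0 : ℝ) 1 := by
    have hle : r / √3 ≤ r := div_le_self hr0 (Real.one_le_sqrt.2 (by norm_num))
    rw [re_sq_eq, sub_pos, hre] at hpos
    have him := abs_lt.1 (abs_lt_of_sq_lt_sq hpos (by positivity))
    constructor <;> linarith [him.1, him.2]
  refine eq_zero_of_laplacian_dirDeriv_I_le (V := H ∘ isothermalChart s₀ r) (C := |lam| / 2 + 1)
    (hH.comp (contDiff_isothermalChart s₀ r)) (by positivity) (fun x => ?_) (fun z hre hpos => ?_)
    (fun z hre hpos => ?_) (fun c hc z hz => ?_) hc hζ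
  · simpa [isothermalChart] using hline (r - √3 * x)
  · rw [Function.comp_apply, isothermalChart_of_re_eq hre, h0 _ (hdiag z hre hpos)]
  · rw [dirDeriv_comp_isothermalChart (hH.differentiable (by norm_num)), Function.comp_apply,
      isothermalChart_of_re_eq hre, dirDeriv, h1 _ (hdiag z hre hpos), zero_apply]
  · rw [← Pi.add_apply, laplacian_dirDeriv_I_comp_isothermalChart hH]
    simp only [Pi.sub_apply, Pi.smul_apply, Function.comp_apply, smul_eq_mul,
      hker _ (isothermalChart_mem_T hr hr' hc.le hz)]
    set V := H (isothermalChart s₀ r z)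
    set v := dirDeriv I (H ∘ isothermalChart s₀ r) z
    calc |1 / 2 * (lam * V) - v| ≤ |1 / 2 * (lam * V)| + |v| := abs_sub _ _
      _ = |lam| / 2 * |V| + |v| := by rw [abs_mul, abs_mul, abs_of_pos one_half_pos]; ring
      _ ≤ (|lam| / 2 + 1) * (|v| + |V|) := by
        nlinarith [abs_nonneg v, abs_nonneg V, mul_nonneg (abs_nonneg lam) (abs_nonneg v)]

theorem eventually_eq_zero_of_kernelOp_eq {lam : ℝ} {H : ℝ × ℝ → ℝ} (hH : ContDiff ℝ 3 H)
    (hker : ∀ p ∈ T, kernelOp H p = lam * H p)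
    (h0 : ∀ x ∈ Ioo (0 : ℝ) 1, H (x, x) = 0) (h1 : ∀ x ∈ Ioo (0 : ℝ) 1, fderiv ℝ H (x, x) = 0)
    {s₀ t : ℝ} (hline : ∀ t, H (charPoint s₀ t) = 0) (ht : 0 ≤ t) (hts : s₀ ∈ Ioo t (2 - t)) :
    ∀ᶠ s in 𝓝 s₀, H (charPoint s t) = 0 := by
  set r := min s₀ (2 - s₀)
  have htr : t < r := lt_min hts.1 (by linarith [hts.2])
  have hρ : 0 < (r - t) / √3 := div_pos (sub_pos.2 htr) (by positivity)
  filter_upwards [Metric.ball_mem_nhds s₀ hρ] with s hs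
  set ζ : ℂ := ⟨(r - t) / √3, s - s₀⟩ with hζ
  have hpos : 0 < (ζ ^ 2).re := by
    rw [re_sq_eq, sub_pos]
    exact sq_lt_sq.2 (hs.trans_le (le_abs_self _))
  have hmem : ζ ∈ carlemanSector (r / √3) (ζ ^ 2).re :=
    ⟨hρ.le, by change (r - t) / √3 ≤ r / √3; gcongr; linarith, le_rfl⟩
  have hzero := eq_zero_comp_isothermalChart hH hker h0 h1 hline (ht.trans htr.le)
    (min_le_left _ _) (by linarith [min_le_right s₀ (2 - s₀)]) hpos hmem
  have hsqrt : √3 * ((r - t) / √3) = r - t := mul_div_cancel₀ _ (by positivity)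
  simpa [isothermalChart, hζ, hsqrt] using hzero

end IsothermalChart

/-! ### Uniqueness -/

section GoursatODE

theorem taylorSum_coeffPrimitive (g : ℝ → ℝ) (w : ℝ → TaylorCoeff) (a b : ℝ) :
    taylorSum (fun b => coeffPrimitive (g b) (w b)) (a, b) =
      g b + taylorSum (fun b => coeffIntegral (w b)) (a, b) := by
  simp only [taylorSum, coeffPrimitive, map_add, map_smul,
    exp_smul_apply_of_apply_eq_zero coeffDeriv_coeffOne, coeffEval_coeffOne, smul_eq_mul, mul_one]

theorem exists_abs_taylorSum_le (R : ℝ) :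
    ∃ C ≥ 0, ∀ (w : ℝ → TaylorCoeff) (a b : ℝ), |a| ≤ R → |taylorSum w (a, b)| ≤ C * ‖w b‖ := by
  have hcont : Continuous fun a : ℝ => coeffEval ∘L NormedSpace.exp (a • coeffDeriv) :=
    continuous_const.clm_comp (contDiff_exp_smul coeffDeriv (n := 0)).continuous
  obtain ⟨C, hC⟩ := (isCompact_Icc (a := -R) (b := R)).exists_bound_of_continuousOn
    hcont.continuousOn
  exact ⟨max C 0, le_max_right C 0, fun w a b ha =>
    (coeffEval ∘L NormedSpace.exp (a • coeffDeriv)).le_of_opNorm_le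
      ((hC a (abs_le.1 ha)).trans (le_max_left C 0)) (w b)⟩

theorem exists_norm_goursatRHS_le (lam k : ℝ) :
    ∃ K ≥ 0, ∀ c w w', ‖goursatRHS lam k c w w'‖ ≤ K * max |c| (max ‖w‖ ‖w'‖) := by
  let X := TaylorCoeff
  let W : ℝ × X × X →L[ℝ] X := .fst ℝ X X ∘L .snd ℝ ℝ (X × X)
  let W' : ℝ × X × X →L[ℝ] X := .snd ℝ X X ∘L .snd ℝ ℝ (X × X)
  let Φ : ℝ × X × X →L[ℝ] X :=
    (lam / 6) • ((ContinuousLinearMap.fst ℝ ℝ (X × X)).smulRight coeffOne + coeffIntegral ∘L W) -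
      (1 / 3 : ℝ) • W - ((1 + 3 * k ^ 2) / 3) • (coeffDeriv ∘L coeffDeriv ∘L W) -
        (2 * k) • (coeffDeriv ∘L W')
  exact ⟨‖Φ‖, norm_nonneg Φ, fun c w w' => Φ.le_opNorm (c, w, w')⟩

theorem eq_zero_of_hasDerivAt_goursatRHS {lam k β C : ℝ} {g : ℝ → ℝ} {w : ℝ → TaylorCoeff}
    (hw : ContDiff ℝ 2 w) (hw0 : w 0 = 0) (hw0' : deriv w 0 = 0)
    (hode : ∀ b, HasDerivAt (deriv w) (goursatRHS lam k (g b) (w b) (deriv w b)) b)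
    (hg : ∀ b ∈ Ico 0 β, |g b| ≤ C * ‖w b‖) : ∀ b ∈ Icc 0 β, w b = 0 := by
  obtain ⟨K, hK, hbound⟩ := exists_norm_goursatRHS_le lam k
  have hderiv (b : ℝ) : HasDerivAt (fun b => (w b, deriv w b))
      (deriv w b, goursatRHS lam k (g b) (w b) (deriv w b)) b :=
    (hw.differentiable two_ne_zero b).hasDerivAt.prodMk (hode b)
  have hgronwall (b : ℝ) (hb : b ∈ Ico 0 β) :
      ‖(deriv w b, goursatRHS lam k (g b) (w b) (deriv w b))‖ ≤
        max 1 (K * max C 1) * ‖(w b, deriv w b)‖ := by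
    have hgb : |g b| ≤ max C 1 * ‖(w b, deriv w b)‖ := (hg b hb).trans <|
      mul_le_mul (le_max_left C 1) (norm_fst_le (w b, deriv w b)) (norm_nonneg _) (by positivity)
    refine norm_prod_le_iff.2 ⟨(norm_snd_le (w b, deriv w b)).trans
      (le_mul_of_one_le_left (norm_nonneg _) (le_max_left _ _)), (hbound _ _ _).trans ?_⟩
    calc K * max |g b| (max ‖w b‖ ‖deriv w b‖) ≤ K * (max C 1 * ‖(w b, deriv w b)‖) :=
          mul_le_mul_of_nonneg_left (max_le hgb
            (le_mul_of_one_le_left (norm_nonneg (w b, deriv w b)) (le_max_right C 1))) hK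
      _ ≤ max 1 (K * max C 1) * ‖(w b, deriv w b)‖ := by
          rw [← mul_assoc]
          gcongr
          exact le_max_right _ _
  intro b hb
  exact congrArg Prod.fst (eq_zero_of_abs_deriv_le_mul_abs_self_of_eq_zero_right
    (fun b _ => (hderiv b).continuousAt.continuousWithinAt) (fun b _ => (hderiv b).hasDerivWithinAt)
    (Prod.ext hw0 hw0') hgronwall b hb)

end GoursatODE

/-- The problem solved by the difference of two inverse controller kernels: the kernel equation on
`T`, with zero data on the edge `y = 1` and to first order on the diagonal. -/
structure IsHomogeneousKernel (lam : ℝ) (D : ℝ × ℝ → ℝ) : Prop where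
  contDiff : ContDiff ℝ 3 D
  kernelOp_eq : ∀ p ∈ T, kernelOp D p = lam * D p
  edge_eq_zero : ∀ x ∈ Icc (0 : ℝ) 1, D (x, 1) = 0
  diagonal_eq_zero : ∀ x ∈ Icc (0 : ℝ) 1, D (x, x) = 0
  fderiv_diagonal_eq_zero : ∀ x ∈ Ioo (0 : ℝ) 1, fderiv ℝ D (x, x) = 0

theorem IsInverseControllerKernel.isHomogeneousKernel_sub {lam : ℝ} {l l' : ℝ → ℝ → ℝ}
    (hl' : IsInverseControllerKernel lam l') (hl : IsInverseControllerKernel lam l) :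
    IsHomogeneousKernel lam (Function.uncurry l' - Function.uncurry l) := by
  obtain ⟨hC', hpde', hedge', hdiag', hdiagx'⟩ := hl'
  obtain ⟨hC, hpde, hedge, hdiag, hdiagx⟩ := hl
  have hd' := hC'.differentiable (by norm_num)
  have hd := hC.differentiable (by norm_num)
  have hdiag0 (x : ℝ) (hx : x ∈ Icc (0 : ℝ) 1) :
      (Function.uncurry l' - Function.uncurry l) (x, x) = 0 :=
    sub_eq_zero.2 ((hdiag' x hx).trans (hdiag x hx).symm)
  refine ⟨hC'.sub hC, fun p hp => ?_, fun x hx => ?_, hdiag0, fun x hx => ?_⟩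
  · rw [kernelOp_sub hC' hC, Pi.sub_apply, Pi.sub_apply, mul_sub]
    exact congrArg₂ _ ((kernelOp_uncurry hC' p.1 p.2).symm.trans (hpde' p.1 p.2 hp))
      ((kernelOp_uncurry hC p.1 p.2).symm.trans (hpde p.1 p.2 hp))
  · exact sub_eq_zero.2 ((hedge' x hx).trans (hedge x hx).symm)
  · have hx0 : dirDeriv (1, 0) (Function.uncurry l' - Function.uncurry l) (x, x) = 0 := by
      rw [dirDeriv_sub _ hd' hd, ← uncurry_pdx hd', ← uncurry_pdx hd]
      have hmem := Ioo_subset_Icc_self hx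
      exact sub_eq_zero.2 ((hdiagx' x hmem).trans (hdiagx x hmem).symm)
    have htangent : dirDeriv (1, 1) (Function.uncurry l' - Function.uncurry l) (x, x) = 0 := by
      refine dirDeriv_eq_zero_of_eventually ((hd'.sub hd) _) ?_
      have hshift : Tendsto (fun r : ℝ => x + r) (𝓝 0) (𝓝 x) := by
        exact (continuous_const_add x).tendsto' 0 x (add_zero x)
      filter_upwards [hshift.eventually (isOpen_Ioo.mem_nhds hx)] with r hr
      simpa using hdiag0 (x + r) (Ioo_subset_Icc_self hr)
    refine ContinuousLinearMap.ext fun v => ?_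
    change dirDeriv v _ _ = 0
    have hv : v = (v.1 - v.2) • ((1, 0) : ℝ × ℝ) + v.2 • ((1, 1) : ℝ × ℝ) := by ext <;> simp
    rw [hv, dirDeriv_add_dir, dirDeriv_smul_dir, dirDeriv_smul_dir]
    simp [hx0, htangent]

namespace IsHomogeneousKernel

variable {lam : ℝ} {D : ℝ × ℝ → ℝ}

theorem deriv_charPoint_zero_right (hD : IsHomogeneousKernel lam D) {s : ℝ}
    (hs : s ∈ Ioo (0 : ℝ) 2) : deriv (fun t => D (charPoint s t)) 0 = 0 := by
  have hcurve := ((contDiff_charPoint (n := 1) contDiff_const contDiff_id).differentiable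
    one_ne_zero (0 : ℝ)).hasDerivAt (f := charPoint s)
  have hchain :=
    (hD.contDiff.differentiable (by norm_num) _).hasFDerivAt.comp_hasDerivAt 0 hcurve
  rw [charPoint_zero_right, hD.fderiv_diagonal_eq_zero _
    ⟨by linarith [hs.1], by linarith [hs.2]⟩] at hchain
  exact hchain.deriv

theorem exists_goursat_eventuallyEq (hD : IsHomogeneousKernel lam D) {s₀ : ℝ}
    (hs₀ : s₀ ∈ Ioo (0 : ℝ) 2) :
    ∃ w : ℝ → TaylorCoeff, ContDiff ℝ 3 w ∧ w 0 = 0 ∧ deriv w 0 = 0 ∧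
      (∀ b, HasDerivAt (deriv w)
        (goursatRHS lam 0 (D (charPoint s₀ b)) (w b) (deriv w b)) b) ∧
      ∀ t, 0 ≤ t → s₀ ∈ Ioo t (2 - t) → (fun s => D (charPoint s t)) =ᶠ[𝓝 s₀]
        fun s => taylorSum (fun b => coeffPrimitive (D (charPoint s₀ b)) (w b)) (s - s₀, t) := by
  have hg : ContDiff ℝ 3 fun b => D (charPoint s₀ b) :=
    hD.contDiff.comp (contDiff_charPoint contDiff_const contDiff_id)
  obtain ⟨w, hw, hw0, hw0', hode⟩ := exists_goursat lam 0 0 hg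
  have hmid : s₀ / 2 ∈ Ioo (0 : ℝ) 1 := ⟨by linarith [hs₀.1], by linarith [hs₀.2]⟩
  have hg0 : D (charPoint s₀ 0) = 0 := by
    rw [charPoint_zero_right, hD.diagonal_eq_zero _ (Ioo_subset_Icc_self hmid)]
  have hg0' := hD.deriv_charPoint_zero_right hs₀
  set G := goursatFun (fun b => D (charPoint s₀ b)) w 0 s₀ with hGdef
  have hG : ContDiff ℝ 3 G := contDiff_goursatFun hg hw 0 s₀
  have hGdiag (x : ℝ) : fderiv ℝ G (x, x) = 0 := ContinuousLinearMap.ext fun v => by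
    have h := dirDeriv_goursatFun_diagonal (hg.of_le (by norm_num)) (hw.of_le (by norm_num)) hw0
      hw0' 0 s₀ v x
    rwa [hg0', zero_mul, zero_add, mul_zero] at h
  refine ⟨w, hw, hw0, by rw [hw0', zero_smul], hode, fun t ht hts => ?_⟩
  have hzero := eventually_eq_zero_of_kernelOp_eq (lam := lam) (H := D - G) (hD.contDiff.sub hG)
    (fun p hp => ?_) (fun x hx => ?_) (fun x hx => ?_) (fun t => ?_) ht hts
  · filter_upwards [hzero] with s hs
    have hslant : slantCoord 0 s₀ (charPoint s t) = (s - s₀, t) := by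
      ext <;> simp only [slantCoord, charPoint] <;> ring
    rw [sub_eq_zero.1 hs, hGdef, goursatFun, Function.comp_apply, hslant]
  · rw [kernelOp_sub hD.contDiff hG, hGdef, kernelOp_goursatFun s₀ hg hw hode]
    simp only [Pi.sub_apply, Pi.smul_apply, smul_eq_mul, hD.kernelOp_eq p hp, mul_sub]
  · rw [Pi.sub_apply, hD.diagonal_eq_zero x (Ioo_subset_Icc_self hx), hGdef,
      goursatFun_diagonal hw0, hg0, sub_zero]
  · rw [fderiv_sub (hD.contDiff.differentiable (by norm_num) _)
      (hG.differentiable (by norm_num) _), hD.fderiv_diagonal_eq_zero x hx, hGdiag, sub_zero]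
  · have hp : (slantCoord 0 s₀ (charPoint s₀ t)).1 = 0 := by
      simp only [slantCoord, charPoint]
      ring
    have ht : (charPoint s₀ t).2 - (charPoint s₀ t).1 = t := by
      simp only [charPoint]
      ring
    rw [Pi.sub_apply, hGdef, goursatFun_of_slantCoord_fst_eq_zero hp, ht, sub_self]

theorem analyticOnNhd_charPoint (hD : IsHomogeneousKernel lam D) {t : ℝ} (ht : 0 ≤ t) :
    AnalyticOnNhd ℝ (fun s => D (charPoint s t)) (Ioo t (2 - t)) := by
  intro s₀ hs₀
  obtain ⟨w, -, -, -, -, hD_eq⟩ := hD.exists_goursat_eventuallyEq (s₀ := s₀)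
    ⟨ht.trans_lt hs₀.1, by linarith [hs₀.2]⟩
  refine AnalyticAt.congr ?_ (hD_eq t ht hs₀).symm
  exact (analyticOnNhd_taylorSum _ t _ (mem_univ _)).fun_comp (analyticAt_id.sub analyticAt_const)

theorem exists_goursat_eqOn (hD : IsHomogeneousKernel lam D) :
    ∃ w : ℝ → TaylorCoeff, ContDiff ℝ 3 w ∧ w 0 = 0 ∧ deriv w 0 = 0 ∧
      (∀ b, HasDerivAt (deriv w)
        (goursatRHS lam 0 (D (charPoint 1 b)) (w b) (deriv w b)) b) ∧
      ∀ t ∈ Ico (0 : ℝ) 1, EqOn (fun s => D (charPoint s t))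
        (fun s => taylorSum (fun b => coeffPrimitive (D (charPoint 1 b)) (w b)) (s - 1, t))
        (Icc t (2 - t)) := by
  obtain ⟨w, hw, hw0, hw0', hode, hD_eq⟩ := hD.exists_goursat_eventuallyEq (s₀ := 1) (by norm_num)
  refine ⟨w, hw, hw0, hw0', hode, fun t ht => ?_⟩
  have h1 : (1 : ℝ) ∈ Ioo t (2 - t) := ⟨ht.2, by linarith [ht.2]⟩
  have hseries : AnalyticOnNhd ℝ
      (fun s => taylorSum (fun b => coeffPrimitive (D (charPoint 1 b)) (w b)) (s - 1, t)) univ :=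
    fun s _ => (analyticOnNhd_taylorSum _ t _ (mem_univ _)).fun_comp
      (analyticAt_id.sub analyticAt_const)
  have hcont : Continuous fun s => D (charPoint s t) :=
    hD.contDiff.continuous.comp (contDiff_charPoint contDiff_id contDiff_const (n := 0)).continuous
  rw [← closure_Ioo (h1.1.trans h1.2).ne]
  exact ((hD.analyticOnNhd_charPoint ht.1).eqOn_of_preconnected_of_eventuallyEq
    (hseries.mono (subset_univ _)) isPreconnected_Ioo h1 (hD_eq t ht.1 h1)).closure
    hcont hseries.continuous

/-- The edge condition expresses the values on `s = 1` by the power series of the `s`-derivative,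
which closes the differential equation in `t`. -/
theorem exists_abs_charPoint_one_le (hD : IsHomogeneousKernel lam D) {w : ℝ → TaylorCoeff}
    (hD_eq : ∀ t ∈ Ico (0 : ℝ) 1, D (charPoint (2 - t) t) =
      taylorSum (fun b => coeffPrimitive (D (charPoint 1 b)) (w b)) (2 - t - 1, t)) :
    ∃ C, ∀ t ∈ Ico (0 : ℝ) 1, |D (charPoint 1 t)| ≤ C * ‖w t‖ := by
  obtain ⟨C, hC0, hC⟩ := exists_abs_taylorSum_le 1
  refine ⟨C * ‖coeffIntegral‖, fun t ht => ?_⟩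
  have hseries := hD_eq t ht
  have hedge : charPoint (2 - t) t = (1 - t, 1) := by
    ext <;> simp only [charPoint] <;> ring
  rw [hedge, hD.edge_eq_zero _ ⟨by linarith [ht.2], by linarith [ht.1]⟩,
    taylorSum_coeffPrimitive, eq_comm, add_eq_zero_iff_eq_neg] at hseries
  rw [hseries, abs_neg, mul_assoc]
  exact (hC _ _ _ (abs_le.2 ⟨by linarith [ht.2], by linarith [ht.1]⟩)).trans
    (mul_le_mul_of_nonneg_left (coeffIntegral.le_opNorm (w t)) hC0)

theorem eq_zero (hD : IsHomogeneousKernel lam D) {p : ℝ × ℝ} (hp : p ∈ T) : D p = 0 := by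
  rcases eq_or_ne p (0, 1) with rfl | hp01
  · exact hD.edge_eq_zero 0 (by norm_num)
  obtain ⟨w, hw, hw0, hw0', hode, hD_eq⟩ := hD.exists_goursat_eqOn
  obtain ⟨C, hvalue⟩ := hD.exists_abs_charPoint_one_le
    fun t ht => hD_eq t ht ⟨by linarith [ht.2], le_rfl⟩
  have hw_zero := eq_zero_of_hasDerivAt_goursatRHS (hw.of_le (by norm_num)) hw0 hw0' hode hvalue
  have ht : p.2 - p.1 ∈ Ico (0 : ℝ) 1 := by
    obtain ⟨hp1, hp12, hp2⟩ := hp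
    refine ⟨by linarith, lt_of_le_of_ne (by linarith) fun h => hp01 ?_⟩
    exact Prod.ext (by simp only; linarith) (by simp only; linarith)
  have hwt := hw_zero _ (Ico_subset_Icc_self ht)
  have hgt : D (charPoint 1 (p.2 - p.1)) = 0 := by
    simpa only [hwt, norm_zero, mul_zero, abs_nonpos_iff] using hvalue _ ht
  rw [← charPoint_add_sub p] at hp ⊢
  obtain ⟨hle, -, hadd⟩ := charPoint_mem_T_iff.1 hp
  refine (hD_eq _ ht ⟨hle, by linarith⟩).trans (taylorSum_of_eq_zero ?_ _)
  rw [hgt, hwt, coeffPrimitive, zero_smul, map_zero, add_zero]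

end IsHomogeneousKernel

end

theorem inverse_controller_kernel_exists_unique_general (lam : ℝ) :
    ∃ l : ℝ → ℝ → ℝ, IsInverseControllerKernel lam l ∧
      ∀ l' : ℝ → ℝ → ℝ, IsInverseControllerKernel lam l' →
        ∀ x y : ℝ, (x, y) ∈ T → l' x y = l x y := by
  obtain ⟨l, hl⟩ := exists_isInverseControllerKernel lam
  exact ⟨l, hl, fun l' hl' x y hxy => sub_eq_zero.1 ((hl'.isHomogeneousKernel_sub hl).eq_zero hxy)⟩

/-- Existence and uniqueness (as a function on `T`) of the inverse controller kernel. -/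
theorem inverse_controller_kernel_exists_unique (lam : ℝ) (hlam : 0 < lam) :
    ∃ l : ℝ → ℝ → ℝ, IsInverseControllerKernel lam l ∧
      ∀ l' : ℝ → ℝ → ℝ, IsInverseControllerKernel lam l' →
        ∀ x y : ℝ, (x, y) ∈ T → l' x y = l x y :=
  inverse_controller_kernel_exists_unique_general lam
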